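/- There exists an absolute constant c₁ such that for every positive integer r, every prime q ≥ exp(2r(log r + log log(r+2) + c₁)) with q ≡ 1 (mod 2r), and every positive integer k with gcd(k, q−1) = r, one has γ_{k,q} > 1/2 and γ'_{k,q} > 1/2 (the criterion under which the Landau approximation C·x/(log x)^{1/h} is asymptotically better than the Ramanujan approximation C·∫₂ˣ dt/(log t)^{1/h} for S_{k,q}(x) and S'_{k,q}(x)). -/

import Mathlib

open Filter Topology

/-- The `k`-th divisor sum function `σ_k(n) = ∑_{d ∣ n} d^k`. -/
def sigmak (k n : ℕ) : ℕ := ∑ d ∈ n.divisors, d ^ k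

/-- The multiplicative order `g_p` of `p^m` modulo `q`. -/
noncomputable def gp (q m p : ℕ) : ℕ := orderOf ((p : ZMod q) ^ m)

/-- The local term at a prime `p` of the prime sum `S(m,q)` of the paper. -/
noncomputable def Sterm (q m p : ℕ) : ℝ :=
  if p = q then 0 else
    (if gp q m p = 1 then
        (q : ℝ) * Real.log p / ((p : ℝ) ^ q - 1)
          - ((q : ℝ) - 1) * Real.log p / ((p : ℝ) ^ (q - 1) - 1)
      else 0)
    + (if 3 ≤ gp q m p then
        (gp q m p : ℝ) * Real.log p / ((p : ℝ) ^ gp q m p - 1)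
          - ((gp q m p : ℝ) - 1) * Real.log p / ((p : ℝ) ^ (gp q m p - 1) - 1)
      else 0)
    + (if gp q m p = 2 then Real.log p / ((p : ℝ) ^ 2 - 1) else 0)
    + (if 4 ≤ gp q m p ∧ 2 ∣ gp q m p then
        Real.log p / ((p : ℝ) ^ (gp q m p / 2) - ((p : ℝ) ^ (gp q m p / 2))⁻¹)
      else 0)

/-- The prime sum `S(m,q)` of the paper (a sum over all primes `p ≠ q`). -/
noncomputable def Smq (q m : ℕ) : ℝ := ∑' p : Nat.Primes, Sterm q m (p : ℕ)

/-- The Dirichlet L-function attached to a Dirichlet character mod `q` (junk value for `q = 0`). -/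
noncomputable def Lfun {q : ℕ} (χ : DirichletCharacter ℂ q) (s : ℂ) : ℂ :=
  if h : q = 0 then 0 else
    haveI : NeZero q := ⟨h⟩
    DirichletCharacter.LFunction χ s

/-- `γ_{K_m} = γ + ∑_{χ ∈ X_m^*} (L'/L)(1,χ)`, the Euler–Kronecker constant of the unique
subfield of `ℚ(ζ_q)` of degree `(q-1)/m`; here `X_m^*` is the set of nonprincipal Dirichlet
characters mod `q` that are trivial on the group `C_m` of `m`-th roots of unity mod `q`. -/
noncomputable def gammaK (q m : ℕ) : ℝ :=
  Real.eulerMascheroniConstant +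
    (∑ᶠ χ ∈ {χ : DirichletCharacter ℂ q | χ ≠ 1 ∧ ∀ a : ZMod q, a ^ m = 1 → χ a = 1},
      deriv (Lfun χ) 1 / Lfun χ 1).re

/-- The Euler–Kronecker constant `γ_{k,q}`, for `q` an odd prime, `r = gcd(k, q-1)` and
`h = (q-1)/r` even:  `γ_{k,q} = γ − (1/h)(2γ_{K_{2r}} − γ_{K_r}) − log q/(h(q−1)) − S(r,q)`. -/
noncomputable def gammakq (q k : ℕ) : ℝ :=
  Real.eulerMascheroniConstant
    - (1 / (((q - 1) / Nat.gcd k (q - 1) : ℕ) : ℝ)) *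
        (2 * gammaK q (2 * Nat.gcd k (q - 1)) - gammaK q (Nat.gcd k (q - 1)))
    - Real.log q / ((((q - 1) / Nat.gcd k (q - 1) : ℕ) : ℝ) * ((q : ℝ) - 1))
    - Smq q (Nat.gcd k (q - 1))

/-- `γ'_{k,q} = γ_{k,q} + log q/(q-1)`. -/
noncomputable def gammakq' (q k : ℕ) : ℝ := gammakq q k + Real.log q / ((q : ℝ) - 1)

/-! For every `s > 1`, orthogonality turns `2 ∑_{χ ∈ X_{2r}} L'/L(s, χ) - ∑_{χ ∈ X_r} L'/L(s, χ)`
into a series in the von Mangoldt function with nonpositive coefficients, because `|X_r| = 2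
|X_{2r}|` and `a ^ r = 1` implies `a ^ (2 r) = 1`. At `s = 1 + 1 / √q` this combination of sums is
therefore nonpositive, and passing to `s = 1` costs only `O(√q (log q)^18)`: for `χ² ≠ 1` by the
zero-free region that comes from the `3 + 4 cos θ + cos 2θ` inequality, for the quadratic character
by a lower bound for `|L(1, χ)|` read off from its Lambert series. Dividing by `h = (q - 1) / r`,
with `r ≤ log q`, makes this contribution to `γ_{k,q}` negligible.

In `S(r, q)` only the primes `p` with `g_p` even contribute positively. For those `p ^ (r g_p / 2)`
is congruent to `-1` modulo `q`, so that `p ^ (g_p / 2) ≥ (q - 1) ^ (1 / r)`, which is at least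
`exp c` when `q ≥ exp (2 r c)`. Hence the upper bound for `S(r, q)` decays as `c` grows, and
`γ_{k,q}` is bounded below by any prescribed number smaller than `γ`. -/

/-! ### The Pólya–Vinogradov inequality -/

lemma norm_sum_range_smul_le_of_antitone {E : Type*} [SeminormedAddCommGroup E] [NormedSpace ℝ E]
    {f : ℕ → E} {a : ℕ → ℝ} {B : ℝ} (hB : ∀ n, ‖∑ i ∈ Finset.range n, f i‖ ≤ B)
    (ha : Antitone a) (ha₀ : ∀ n, 0 ≤ a n) (n : ℕ) :
    ‖∑ i ∈ Finset.range n, a i • f i‖ ≤ a 0 * B := by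
  have abel_summation : ∑ i ∈ Finset.range n, a i • f i = a n • ∑ i ∈ Finset.range n, f i +
      ∑ i ∈ Finset.range n, (a i - a (i + 1)) • ∑ j ∈ Finset.range (i + 1), f j := by
    induction n with
    | zero => simp
    | succ n ih =>
      rw [Finset.sum_range_succ, ih, Finset.sum_range_succ f, Finset.sum_range_succ _ n,
        Finset.sum_range_succ f]
      module
  have hdiff (i : ℕ) : 0 ≤ a i - a (i + 1) := sub_nonneg.2 (ha i.le_succ)
  calc ‖∑ i ∈ Finset.range n, a i • f i‖
      ≤ a n * B + ∑ i ∈ Finset.range n, (a i - a (i + 1)) * B := by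
        rw [abel_summation]
        refine norm_add_le_of_le ?_ (norm_sum_le_of_le _ fun i _ ↦ ?_)
        · rw [norm_smul, Real.norm_of_nonneg (ha₀ n)]
          exact mul_le_mul_of_nonneg_left (hB n) (ha₀ n)
        · rw [norm_smul, Real.norm_of_nonneg (hdiff i)]
          exact mul_le_mul_of_nonneg_left (hB _) (hdiff i)
    _ = a 0 * B := by
        rw [← Finset.sum_mul, Finset.sum_range_sub']
        ring

lemma norm_geom_sum_le {K : Type*} [NormedDivisionRing K] {z : K} (hz : ‖z‖ ≤ 1) (hz₁ : z ≠ 1)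
    (n : ℕ) : ‖∑ i ∈ Finset.range n, z ^ i‖ ≤ 2 / ‖z - 1‖ := by
  rw [geom_sum_eq hz₁, norm_div]
  gcongr
  calc ‖z ^ n - 1‖ ≤ ‖z ^ n‖ + ‖(1 : K)‖ := norm_sub_le _ _
    _ ≤ 1 + 1 := by
      rw [norm_pow, norm_one]
      gcongr
      exact pow_le_one₀ (norm_nonneg z) hz
    _ = 2 := one_add_one_eq_two

lemma two_mul_mul_one_sub_le_sin {t : ℝ} (ht₀ : 0 ≤ t) (ht₁ : t ≤ 1) :
    2 * t * (1 - t) ≤ Real.sin (Real.pi * t) := by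
  wlog ht : t ≤ 1 / 2 generalizing t
  · have h := this (t := 1 - t) (by linarith) (by linarith) (by linarith)
    rw [mul_one_sub Real.pi, Real.sin_pi_sub] at h
    linarith
  have h := Real.mul_le_sin (x := Real.pi * t) (by positivity) (by nlinarith [Real.pi_pos])
  rw [← mul_assoc, div_mul_cancel₀ _ Real.pi_ne_zero] at h
  nlinarith

lemma norm_stdAddChar_natCast_sub_one {N : ℕ} [NeZero N] (k : ℕ) :
    ‖ZMod.stdAddChar (k : ZMod N) - 1‖ = 2 * |Real.sin (Real.pi * (k / N))| := by
  have h := ZMod.stdAddChar_coe (N := N) (k : ℤ)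
  rw [show (2 * Real.pi * Complex.I * ((k : ℤ) : ℂ) / N : ℂ) =
    Complex.I * ((2 * (Real.pi * (k / N)) : ℝ) : ℂ) by push_cast; ring, Int.cast_natCast] at h
  rw [h, Complex.norm_exp_I_mul_ofReal_sub_one, norm_mul, Real.norm_eq_abs, Real.norm_eq_abs,
    mul_div_cancel_left₀ _ two_ne_zero, abs_two]

lemma two_div_norm_stdAddChar_sub_one_le {N : ℕ} [NeZero N] {k : ℕ} (hk : 0 < k) (hkN : k < N) :
    2 / ‖ZMod.stdAddChar (k : ZMod N) - 1‖ ≤ N / 2 * ((k : ℝ)⁻¹ + ((N - k : ℕ) : ℝ)⁻¹) := by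
  have hN : (0 : ℝ) < N := by exact_mod_cast hk.trans hkN
  have hk' : (0 : ℝ) < k := by exact_mod_cast hk
  have hNk : (0 : ℝ) < N - k := sub_pos.2 (by exact_mod_cast hkN)
  have hsin : 2 * (k / N : ℝ) * (1 - k / N) ≤ Real.sin (Real.pi * (k / N)) :=
    two_mul_mul_one_sub_le_sin (by positivity) ((div_le_one hN).2 (by linarith))
  have hpos : 0 < 2 * (k / N : ℝ) * (1 - k / N) :=
    mul_pos (mul_pos two_pos (div_pos hk' hN)) (sub_pos.2 ((div_lt_one hN).2 (by linarith)))
  rw [norm_stdAddChar_natCast_sub_one, Nat.cast_sub hkN.le]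
  calc 2 / (2 * |Real.sin (Real.pi * (k / N))|)
      ≤ 2 / (2 * (2 * (k / N : ℝ) * (1 - k / N))) := by
        gcongr
        exact hsin.trans (le_abs_self _)
    _ = N / 2 * ((k : ℝ)⁻¹ + ((N : ℝ) - k)⁻¹) := by
        field_simp
        ring

lemma sum_zmod_eq_sum_range {N : ℕ} [NeZero N] {M : Type*} [AddCommMonoid M] (F : ZMod N → M) :
    ∑ b, F b = ∑ k ∈ Finset.range N, F (k : ZMod N) :=
  Finset.sum_bij' (fun b _ ↦ b.val) (fun k _ ↦ (k : ZMod N))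
    (fun b _ ↦ Finset.mem_range.2 (ZMod.val_lt b)) (fun _ _ ↦ Finset.mem_univ _)
    (fun b _ ↦ ZMod.natCast_zmod_val b)
    (fun _ hk ↦ ZMod.val_cast_of_lt (Finset.mem_range.1 hk))
    (fun b _ ↦ by rw [ZMod.natCast_zmod_val])

lemma sum_range_inv_sub_le (N : ℕ) :
    ∑ k ∈ Finset.range N, ((N - k : ℕ) : ℝ)⁻¹ ≤ 1 + Real.log N := by
  refine le_of_eq_of_le ?_ (harmonic_le_one_add_log N)
  rw [← Finset.sum_range_reflect, harmonic]
  push_cast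
  refine Finset.sum_congr rfl fun k hk ↦ ?_
  rw [show N - (N - 1 - k) = k + 1 by have := Finset.mem_range.1 hk; lia, Nat.cast_succ]

lemma sum_range_inv_le (N : ℕ) : ∑ k ∈ Finset.range N, (k : ℝ)⁻¹ ≤ 1 + Real.log N := by
  refine le_trans ?_ (harmonic_le_one_add_log N)
  rw [harmonic]
  push_cast
  have h := (Finset.sum_range_succ (fun k : ℕ ↦ (k : ℝ)⁻¹) N).symm.trans
    (Finset.sum_range_succ' (fun k : ℕ ↦ (k : ℝ)⁻¹) N)
  have hN : 0 ≤ (N : ℝ)⁻¹ := by positivity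
  push_cast at h
  linarith

lemma isPrimitive_of_prime {p : ℕ} [Fact p.Prime] {R : Type*} [CommMonoidWithZero R]
    {χ : DirichletCharacter R p} (hχ : χ ≠ 1) : χ.IsPrimitive :=
  ((Fact.out : p.Prime).eq_one_or_self_of_dvd _ χ.conductor_dvd_level).resolve_left
    fun h ↦ hχ (χ.eq_one_iff_conductor_eq_one.2 h)

lemma norm_gaussSum_stdAddChar {N : ℕ} [NeZero N] {χ : DirichletCharacter ℂ N}
    (hχ : χ.IsPrimitive) : ‖gaussSum χ (ZMod.stdAddChar (N := N))‖ = √N := by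
  set g := gaussSum χ (ZMod.stdAddChar (N := N))
  have hinv : ∑ j : ZMod N, ZMod.stdAddChar j * (χ⁻¹ (-j) * g) = N := by
    simpa [ZMod.dft_apply, hχ.fourierTransform_eq_inv_mul_gaussSum, g] using
      congrFun (ZMod.dft_dft χ) (-1)
  have hstar : star g * g = N := by
    rw [← hinv, star_gaussSum_eq, gaussSum, Finset.sum_mul, ← Equiv.sum_comp (Equiv.neg _)]
    refine Finset.sum_congr rfl fun j _ ↦ ?_
    rw [Equiv.neg_apply, AddChar.inv_apply, neg_neg]
    ring
  have hnorm := congrArg norm hstar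
  rw [norm_mul, norm_star, Complex.norm_natCast] at hnorm
  rw [← hnorm, Real.sqrt_mul_self (norm_nonneg _)]

lemma sum_range_mul_gaussSum_inv {N : ℕ} [NeZero N] {χ : DirichletCharacter ℂ N}
    (hχ : χ.IsPrimitive) (e : AddChar (ZMod N) ℂ) (M n : ℕ) :
    (∑ i ∈ Finset.range n, χ ((M + i : ℕ) : ZMod N)) * gaussSum χ⁻¹ e =
      ∑ b, χ⁻¹ b * (e (M * b) * ∑ i ∈ Finset.range n, e b ^ i) := by
  have hχ' : χ⁻¹.IsPrimitive := χ.conductor_inv.trans hχ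
  have hshift (a : ZMod N) : χ a * gaussSum χ⁻¹ e = ∑ b, χ⁻¹ b * e (a * b) := by
    simpa [gaussSum] using (gaussSum_mulShift_of_isPrimitive e hχ' a).symm
  rw [Finset.sum_mul, Finset.sum_congr rfl fun i _ ↦ hshift _, Finset.sum_comm]
  refine Finset.sum_congr rfl fun b _ ↦ ?_
  rw [← Finset.mul_sum, Finset.mul_sum _ _ (e (M * b))]
  congr! 2 with i _
  rw [← AddChar.map_nsmul_eq_pow, ← AddChar.map_add_eq_mul, nsmul_eq_mul]
  push_cast
  ring_nf

lemma norm_sum_range_dirichletCharacter_le {N : ℕ} [NeZero N] {χ : DirichletCharacter ℂ N}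
    (hχ : χ.IsPrimitive) (hχ₁ : χ ≠ 1) (M n : ℕ) :
    ‖∑ i ∈ Finset.range n, χ ((M + i : ℕ) : ZMod N)‖ ≤ √N * (1 + Real.log N) := by
  set e := ZMod.stdAddChar (N := N)
  have hχ' : χ⁻¹.IsPrimitive := χ.conductor_inv.trans hχ
  have hN₁ : N ≠ 1 := fun h ↦ hχ₁ (DirichletCharacter.level_one' χ h)
  have term_le : ∀ k ∈ Finset.range N, ‖χ⁻¹ (k : ZMod N) * (e (M * (k : ZMod N)) *
      ∑ i ∈ Finset.range n, e (k : ZMod N) ^ i)‖ ≤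
      N / 2 * ((k : ℝ)⁻¹ + ((N - k : ℕ) : ℝ)⁻¹) := by
    intro k hk
    rcases k.eq_zero_or_pos with rfl | hk₀
    · rw [Nat.cast_zero, DirichletCharacter.map_zero' _ hN₁, zero_mul, norm_zero]
      positivity
    have hkN := Finset.mem_range.1 hk
    have hne : e (k : ZMod N) ≠ 1 := by
      rw [← e.map_zero_eq_one]
      refine ZMod.injective_stdAddChar.ne fun h ↦ ?_
      exact Nat.not_dvd_of_pos_of_lt hk₀ hkN ((ZMod.natCast_eq_zero_iff k N).1 h)
    rw [norm_mul, norm_mul, AddChar.norm_apply, one_mul]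
    exact (mul_le_of_le_one_left (norm_nonneg _) (DirichletCharacter.norm_le_one _ _)).trans
      ((norm_geom_sum_le (AddChar.norm_apply _ _).le hne n).trans
        (two_div_norm_stdAddChar_sub_one_le hk₀ hkN))
  have mul_sqrt_le : ‖∑ i ∈ Finset.range n, χ ((M + i : ℕ) : ZMod N)‖ * √N ≤
      N * (1 + Real.log N) := by
    rw [← norm_gaussSum_stdAddChar hχ', ← norm_mul,
      sum_range_mul_gaussSum_inv hχ, sum_zmod_eq_sum_range]
    refine (norm_sum_le_of_le _ term_le).trans ?_
    rw [← Finset.mul_sum, Finset.sum_add_distrib]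
    nlinarith [sum_range_inv_le N, sum_range_inv_sub_le N, (Nat.cast_nonneg N : (0 : ℝ) ≤ N)]
  have hsqrt : 0 < √(N : ℝ) := Real.sqrt_pos.2 (Nat.cast_pos.2 (NeZero.pos N))
  refine le_of_mul_le_mul_right (mul_sqrt_le.trans_eq ?_) hsqrt
  rw [mul_right_comm, Real.mul_self_sqrt N.cast_nonneg]

lemma norm_hasSum_sub_sum_range_le {N : ℕ} [NeZero N] {χ : DirichletCharacter ℂ N}
    (hχ : χ.IsPrimitive) (hχ₁ : χ ≠ 1) {a : ℕ → ℝ} {M : ℕ} (ha : Antitone fun i ↦ a (M + i))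
    (ha₀ : ∀ i, 0 ≤ a (M + i)) {S : ℂ} (hS : HasSum (fun n ↦ (a n : ℂ) * χ n) S) :
    ‖S - ∑ n ∈ Finset.range M, (a n : ℂ) * χ n‖ ≤ a M * (√N * (1 + Real.log N)) := by
  have htail : Tendsto
      (fun n ↦ ∑ i ∈ Finset.range n, a (M + i) • χ ((M + i : ℕ) : ZMod N)) atTop
      (𝓝 (S - ∑ n ∈ Finset.range M, (a n : ℂ) * χ n)) := by
    refine ((hS.tendsto_sum_nat.comp (tendsto_add_atTop_nat M)).sub_const
      (∑ n ∈ Finset.range M, (a n : ℂ) * χ n)).congr fun n ↦ ?_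
    simp only [Function.comp_apply, add_comm n M, Finset.sum_range_add, add_sub_cancel_left,
      Complex.real_smul]
  exact le_of_tendsto' htail.norm (norm_sum_range_smul_le_of_antitone
    (norm_sum_range_dirichletCharacter_le hχ hχ₁ M) ha ha₀)

/-! ### Bounds for the derivatives of `L(s, χ)` -/

lemma logMul_iterate_apply (f : ℕ → ℂ) (k n : ℕ) :
    (LSeries.logMul^[k] f) n = Complex.log n ^ k * f n := by
  induction k generalizing f with
  | zero => simp
  | succ k ih =>
    rw [Function.iterate_succ_apply, ih, LSeries.logMul]
    ring

lemma hasSum_iteratedDeriv_LFunction {N : ℕ} [NeZero N] (χ : DirichletCharacter ℂ N) (k : ℕ)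
    {s : ℝ} (hs : 1 < s) :
    HasSum (fun n : ℕ ↦ ((Real.log n ^ k / (n : ℝ) ^ s : ℝ) : ℂ) * χ n)
      ((-1) ^ k * iteratedDeriv k χ.LFunction s) := by
  have hs' : 1 < (s : ℂ).re := by rwa [Complex.ofReal_re]
  have habs : LSeries.abscissaOfAbsConv (χ ·) < (s : ℂ).re := by
    rw [DirichletCharacter.absicssaOfAbsConv_eq_one (NeZero.ne N)]
    exact_mod_cast hs'
  have hderiv : iteratedDeriv k χ.LFunction s = iteratedDeriv k (LSeries (χ ·)) s := by
    refine Filter.EventuallyEq.iteratedDeriv_eq k ?_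
    filter_upwards [(isOpen_lt continuous_const Complex.continuous_re).mem_nhds hs'] with z hz
    exact DirichletCharacter.LFunction_eq_LSeries χ hz
  have hsum : LSeriesSummable (LSeries.logMul^[k] (χ ·)) (s : ℂ) := by
    apply LSeriesSummable_of_abscissaOfAbsConv_lt_re
    rwa [LSeries.absicssaOfAbsConv_logPowMul]
  rw [hderiv, LSeries_iteratedDeriv k habs, ← mul_assoc, ← mul_pow, neg_one_mul, neg_neg, one_pow,
    one_mul]
  refine hsum.hasSum.congr_fun fun n ↦ ?_
  rcases n.eq_zero_or_pos with rfl | hn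
  · simp [Real.zero_rpow (zero_lt_one.trans hs).ne']
  · rw [LSeries.term_of_ne_zero hn.ne', logMul_iterate_apply]
    push_cast
    rw [Complex.ofReal_cpow n.cast_nonneg, Complex.ofReal_natCast, div_mul_eq_mul_div]

lemma antitoneOn_log_pow_div_rpow (k : ℕ) {s : ℝ} (hs : 0 < s) :
    AntitoneOn (fun x : ℝ ↦ Real.log x ^ k / x ^ s) (Set.Ici (Real.exp (k / s))) := by
  intro x (hx : _ ≤ x) y (hy : _ ≤ y) hxy
  have hx₁ : 1 ≤ x := (Real.one_le_exp (by positivity)).trans hx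
  have hx₀ : 0 < x := by linarith
  rcases eq_or_ne k 0 with rfl | hk
  · simp only [pow_zero]
    gcongr
  have hk' : (0 : ℝ) < k := Nat.cast_pos.2 (Nat.pos_of_ne_zero hk)
  have as_pow {z : ℝ} (hz : 0 ≤ z) :
      Real.log z ^ k / z ^ s = (Real.log z / z ^ (s / k)) ^ k := by
    rw [div_pow, ← Real.rpow_mul_natCast hz, div_mul_cancel₀ s hk'.ne']
  have hanti : Real.log y / y ^ (s / k) ≤ Real.log x / x ^ (s / k) :=
    Real.log_div_self_rpow_antitoneOn (div_pos hs hk') (by simpa using hx) (by simpa using hy) hxy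
  simp only [as_pow hx₀.le, as_pow (hx₀.le.trans hxy)]
  gcongr
  exact div_nonneg (Real.log_nonneg (hx₁.trans hxy)) (Real.rpow_nonneg (hx₀.le.trans hxy) _)

lemma sum_range_log_pow_div_le (k N : ℕ) {s : ℝ} (hs : 1 ≤ s) :
    ∑ n ∈ Finset.range N, Real.log n ^ k / (n : ℝ) ^ s ≤ Real.log N ^ k * (1 + Real.log N) := by
  calc ∑ n ∈ Finset.range N, Real.log n ^ k / (n : ℝ) ^ s
      ≤ ∑ n ∈ Finset.range N, Real.log N ^ k * (n : ℝ)⁻¹ := by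
        refine Finset.sum_le_sum fun n hn ↦ ?_
        rcases n.eq_zero_or_pos with rfl | hn₀
        · simp [Real.zero_rpow (zero_lt_one.trans_le hs).ne']
        have hn₁ : (1 : ℝ) ≤ n := by exact_mod_cast hn₀
        have hnN : Real.log n ≤ Real.log N :=
          Real.log_le_log (by linarith) (by exact_mod_cast (Finset.mem_range.1 hn).le)
        rw [div_eq_mul_inv]
        gcongr
        exact Real.self_le_rpow_of_one_le hn₁ hs
    _ ≤ Real.log N ^ k * (1 + Real.log N) := by
        rw [← Finset.mul_sum]
        gcongr
        exact sum_range_inv_le N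

lemma antitone_log_pow_div_rpow_add {k N : ℕ} (hN : Real.exp k ≤ N) {s : ℝ} (hs : 1 ≤ s) :
    Antitone fun i ↦ Real.log ((N + i : ℕ) : ℝ) ^ k / ((N + i : ℕ) : ℝ) ^ s := by
  have hmem (i : ℕ) : ((N + i : ℕ) : ℝ) ∈ Set.Ici (Real.exp (k / s)) := by
    refine ((Real.exp_le_exp.2 (div_le_self k.cast_nonneg hs)).trans hN).trans ?_
    exact_mod_cast N.le_add_right i
  exact fun i j hij ↦ antitoneOn_log_pow_div_rpow k (zero_lt_one.trans_le hs) (hmem i) (hmem j)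
    (by gcongr)

section PrimitiveCharacter

variable {N : ℕ} [NeZero N] {χ : DirichletCharacter ℂ N}

lemma norm_iteratedDeriv_LFunction_le_of_one_lt (hχ : χ.IsPrimitive) (hχ₁ : χ ≠ 1) {k : ℕ}
    (hN : Real.exp k ≤ N) {s : ℝ} (hs : 1 < s) :
    ‖iteratedDeriv k χ.LFunction s‖ ≤ 2 * (1 + Real.log N) ^ (k + 1) := by
  have hN₁ : (1 : ℝ) ≤ N := (Real.one_le_exp k.cast_nonneg).trans hN
  have hcoeff (n : ℕ) : 0 ≤ Real.log n ^ k / (n : ℝ) ^ s :=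
    div_nonneg (pow_nonneg (Real.log_natCast_nonneg n) k) (by positivity)
  have tail_le := norm_hasSum_sub_sum_range_le hχ hχ₁
    (antitone_log_pow_div_rpow_add hN hs.le) (fun i ↦ hcoeff (N + i))
    (hasSum_iteratedDeriv_LFunction χ k hs)
  have head_le : ‖∑ n ∈ Finset.range N, ((Real.log n ^ k / (n : ℝ) ^ s : ℝ) : ℂ) * χ n‖ ≤
      Real.log N ^ k * (1 + Real.log N) := by
    refine (norm_sum_le_of_le _ fun n _ ↦ ?_).trans (sum_range_log_pow_div_le k N hs.le)
    rw [norm_mul, Complex.norm_real, Real.norm_of_nonneg (hcoeff n)]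
    exact mul_le_of_le_one_right (hcoeff n) (DirichletCharacter.norm_le_one _ _)
  have boundary_le : Real.log N ^ k / (N : ℝ) ^ s * (√N * (1 + Real.log N)) ≤
      Real.log N ^ k * (1 + Real.log N) := by
    have hsqrt : √(N : ℝ) ≤ (N : ℝ) ^ s :=
      (Real.sqrt_le_iff.2 ⟨by linarith, le_self_pow₀ hN₁ two_ne_zero⟩).trans
        (Real.self_le_rpow_of_one_le hN₁ hs.le)
    rw [div_mul_eq_mul_div, div_le_iff₀ (by positivity), mul_comm √_, ← mul_assoc]
    gcongr
  have hpow : Real.log N ^ k * (1 + Real.log N) ≤ (1 + Real.log N) ^ (k + 1) := by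
    rw [pow_succ]
    gcongr
    linarith
  have hnorm := norm_le_norm_add_norm_sub' ((-1) ^ k * iteratedDeriv k χ.LFunction s : ℂ)
    (∑ n ∈ Finset.range N, ((Real.log n ^ k / (n : ℝ) ^ s : ℝ) : ℂ) * χ n)
  rw [norm_mul, norm_pow, norm_neg, norm_one, one_pow, one_mul] at hnorm
  linarith

lemma norm_iteratedDeriv_LFunction_le (hχ : χ.IsPrimitive) (hχ₁ : χ ≠ 1) {k : ℕ}
    (hN : Real.exp k ≤ N) {s : ℝ} (hs : 1 ≤ s) :
    ‖iteratedDeriv k χ.LFunction s‖ ≤ 2 * (1 + Real.log N) ^ (k + 1) := by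
  have hdiff : ContDiff ℂ k χ.LFunction :=
    (DirichletCharacter.differentiable_LFunction hχ₁).contDiff
  have hcont : Continuous fun t : ℝ ↦ ‖iteratedDeriv k χ.LFunction t‖ :=
    ((hdiff.continuous_iteratedDeriv k le_rfl).comp Complex.continuous_ofReal).norm
  refine le_of_tendsto (hcont.continuousWithinAt (s := Set.Ioi s) (x := s)) ?_
  filter_upwards [self_mem_nhdsWithin] with t ht
  exact norm_iteratedDeriv_LFunction_le_of_one_lt hχ hχ₁ hN (hs.trans_lt ht)

lemma norm_LFunction_sub_sum_range_le (hχ : χ.IsPrimitive) (hχ₁ : χ ≠ 1) {M : ℕ} (hM : 0 < M)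
    {s : ℝ} (hs : 1 ≤ s) :
    ‖χ.LFunction s - ∑ n ∈ Finset.range M, ((n : ℝ) ^ (-s) : ℝ) * χ n‖ ≤
      (M : ℝ) ^ (-s) * (√N * (1 + Real.log N)) := by
  have of_one_lt {t : ℝ} (ht : 1 < t) :
      ‖χ.LFunction t - ∑ n ∈ Finset.range M, ((n : ℝ) ^ (-t) : ℝ) * χ n‖ ≤
        (M : ℝ) ^ (-t) * (√N * (1 + Real.log N)) := by
    refine norm_hasSum_sub_sum_range_le hχ hχ₁ (a := fun n ↦ (n : ℝ) ^ (-t)) (fun i j hij ↦ ?_)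
      (fun i ↦ by positivity) ?_
    · exact Real.rpow_le_rpow_of_nonpos (by positivity) (by gcongr) (by linarith)
    · simpa [Real.rpow_neg] using hasSum_iteratedDeriv_LFunction χ 0 ht
  have hrpow (n : ℕ) : ContinuousAt (fun t : ℝ ↦ (n : ℝ) ^ (-t)) s :=
    (Real.continuousAt_const_rpow' (neg_ne_zero.2 (by linarith))).comp continuousAt_neg
  have hleft : ContinuousAt (fun t : ℝ ↦
      ‖χ.LFunction t - ∑ n ∈ Finset.range M, ((n : ℝ) ^ (-t) : ℝ) * χ n‖) s :=
    (((DirichletCharacter.differentiable_LFunction hχ₁).continuous.comp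
      Complex.continuous_ofReal).continuousAt.sub (tendsto_finsetSum _ fun n _ ↦
        (Complex.continuous_ofReal.continuousAt.comp (hrpow n)).mul_const _)).norm
  refine le_of_tendsto_of_tendsto (hleft.mono_left nhdsWithin_le_nhds)
    (((hrpow M).mul_const _).mono_left (nhdsWithin_le_nhds (s := Set.Ioi s))) ?_
  filter_upwards [self_mem_nhdsWithin] with t ht using of_one_lt (hs.trans_lt ht)

end PrimitiveCharacter

/-! ### Comparison with the Riemann zeta function -/

lemma tsum_inv_rpow_le {s : ℝ} (hs : 1 < s) : ∑' n : ℕ, ((n : ℝ) ^ s)⁻¹ ≤ s / (s - 1) := by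
  have hzero : ((0 : ℕ) : ℝ) ^ s = 0 := by simp [Real.zero_rpow (zero_lt_one.trans hs).ne']
  have hlimit := ZetaAsymptotics.zeta_limit_aux1 hs
  have hnonneg : 0 ≤ ZetaAsymptotics.termTSum s :=
    tsum_nonneg fun n ↦ ZetaAsymptotics.term_nonneg (n + 1) s
  have hsplit : s / (s - 1) = 1 + 1 / (s - 1) := by
    have : s - 1 ≠ 0 := by linarith
    field_simp
    ring
  rw [(Real.summable_nat_rpow_inv.2 hs).tsum_eq_zero_add, hzero, inv_zero, zero_add, hsplit]
  push_cast
  simp only [one_div] at hlimit ⊢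
  nlinarith

lemma norm_LFunction_le_div_sub_one {N : ℕ} [NeZero N] (χ : DirichletCharacter ℂ N) {s : ℝ}
    (hs : 1 < s) : ‖χ.LFunction s‖ ≤ s / (s - 1) := by
  have hsum := hasSum_iteratedDeriv_LFunction χ 0 hs
  simp only [pow_zero, one_mul, iteratedDeriv_zero, one_div] at hsum
  rw [← hsum.tsum_eq]
  refine (tsum_of_norm_bounded (Real.summable_nat_rpow_inv.2 hs).hasSum fun n ↦ ?_).trans
    (tsum_inv_rpow_le hs)
  rw [norm_mul, Complex.norm_real, Real.norm_of_nonneg (by positivity)]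
  exact mul_le_of_le_one_right (by positivity) (χ.norm_le_one _)

lemma hasSum_neg_logDeriv_LFunction {N : ℕ} [NeZero N] (χ : DirichletCharacter ℂ N) {s : ℝ}
    (hs : 1 < s) :
    HasSum (fun n : ℕ ↦ χ n * ((ArithmeticFunction.vonMangoldt n / (n : ℝ) ^ s : ℝ) : ℂ))
      (-logDeriv χ.LFunction s) := by
  have hs' : 1 < (s : ℂ).re := by rwa [Complex.ofReal_re]
  have hsum := (DirichletCharacter.LSeriesSummable_twist_vonMangoldt χ hs').LSeriesHasSum
  rw [DirichletCharacter.LSeries_twist_vonMangoldt_eq χ hs',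
    ← DirichletCharacter.deriv_LFunction_eq_deriv_LSeries χ hs',
    ← DirichletCharacter.LFunction_eq_LSeries χ hs', neg_div, ← logDeriv_apply] at hsum
  refine hsum.congr_fun fun n ↦ ?_
  rcases eq_or_ne n 0 with rfl | hn
  · simp
  · rw [LSeries.term_of_ne_zero hn, Complex.ofReal_div, Complex.ofReal_cpow n.cast_nonneg]
    simp [mul_div_assoc]

lemma hasSum_neg_logDeriv_riemannZeta {s : ℝ} (hs : 1 < s) :
    HasSum (fun n : ℕ ↦ ((ArithmeticFunction.vonMangoldt n / (n : ℝ) ^ s : ℝ) : ℂ))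
      (-logDeriv riemannZeta s) := by
  have hsum := hasSum_neg_logDeriv_LFunction (1 : DirichletCharacter ℂ 1) hs
  rw [DirichletCharacter.LFunction_modOne_eq] at hsum
  refine hsum.congr_fun fun n ↦ ?_
  rw [Subsingleton.elim (n : ZMod 1) 1, map_one, one_mul]

lemma norm_logDeriv_LFunction_le {N : ℕ} [NeZero N] (χ : DirichletCharacter ℂ N) {s : ℝ}
    (hs : 1 < s) : ‖logDeriv χ.LFunction s‖ ≤ ‖logDeriv riemannZeta s‖ := by
  have hzeta := Complex.hasSum_re (hasSum_neg_logDeriv_riemannZeta hs)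
  simp only [Complex.ofReal_re] at hzeta
  rw [← norm_neg, ← (hasSum_neg_logDeriv_LFunction χ hs).tsum_eq,
    ← norm_neg (logDeriv riemannZeta s)]
  refine (tsum_of_norm_bounded hzeta fun n ↦ ?_).trans (Complex.re_le_norm _)
  have hn : 0 ≤ ArithmeticFunction.vonMangoldt n / (n : ℝ) ^ s :=
    div_nonneg ArithmeticFunction.vonMangoldt_nonneg (by positivity)
  rw [norm_mul, Complex.norm_real, Real.norm_of_nonneg hn]
  exact mul_le_of_le_one_left hn (χ.norm_le_one _)

lemma eventually_norm_logDeriv_riemannZeta_le :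
    ∀ᶠ x : ℝ in 𝓝[>] 0, ‖logDeriv riemannZeta ((1 + x : ℝ) : ℂ)‖ ≤ 2 / x := by
  obtain ⟨C, hC⟩ := log_deriv_riemannZeta_add_inv_sub_bounded.bound
  have hlim : Tendsto (fun x : ℝ ↦ ((1 + x : ℝ) : ℂ)) (𝓝[>] 0) (𝓝[≠] 1) := by
    refine tendsto_nhdsWithin_iff.2 ⟨?_, ?_⟩
    · exact Tendsto.mono_left (Continuous.tendsto' (by fun_prop) _ _ (by simp)) nhdsWithin_le_nhds
    · filter_upwards [self_mem_nhdsWithin] with x (hx : 0 < x)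
      simpa using hx.ne'
  filter_upwards [hlim.eventually hC, self_mem_nhdsWithin,
    tendsto_inv_nhdsGT_zero.eventually_ge_atTop C] with x hbound (hx : 0 < x) hCx
  have hpole : ‖(((1 + x : ℝ) : ℂ) - 1)⁻¹‖ = x⁻¹ := by
    rw [Complex.ofReal_add, Complex.ofReal_one, add_sub_cancel_left, norm_inv, Complex.norm_real,
      Real.norm_of_nonneg hx.le]
  rw [norm_one, mul_one, ← logDeriv_apply] at hbound
  have htri := norm_sub_le_of_le hbound hpole.le
  rw [add_sub_cancel_right] at htri
  rw [div_eq_mul_inv]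
  linarith

/-! ### Logarithmic derivatives at `1` of nonreal characters -/

lemma norm_logDeriv_sub_logDeriv_le {f : ℂ → ℂ} (hf : Differentiable ℂ f) {a b m A B : ℝ}
    (hab : a ≤ b) (hm : 0 < m) (hfm : ∀ x ∈ Set.Icc a b, m ≤ ‖f x‖)
    (hA : ∀ x ∈ Set.Icc a b, ‖deriv f x‖ ≤ A) (hB : ∀ x ∈ Set.Icc a b, ‖deriv (deriv f) x‖ ≤ B) :
    ‖logDeriv f b - logDeriv f a‖ ≤ (B / m + (A / m) ^ 2) * (b - a) := by
  have hne : ∀ x ∈ Set.Icc a b, f x ≠ 0 := fun x hx ↦ norm_pos_iff.1 (hm.trans_le (hfm x hx))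
  refine norm_image_sub_le_of_norm_deriv_le_segment' (f := fun t : ℝ ↦ logDeriv f t)
    (f' := fun t : ℝ ↦ (deriv (deriv f) t * f t - deriv f t * deriv f t) / f t ^ 2)
    (fun x hx ↦ ?_) (fun x hx ↦ ?_) b ⟨hab, le_rfl⟩
  · exact ((hf.deriv x).hasDerivAt.div (hf x).hasDerivAt (hne x hx)).comp_ofReal.hasDerivWithinAt
  have hx' := Set.Ico_subset_Icc_self hx
  have hA₀ : 0 ≤ A := (norm_nonneg _).trans (hA x hx')
  have hB₀ : 0 ≤ B := (norm_nonneg _).trans (hB x hx')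
  have hsplit : (deriv (deriv f) x * f x - deriv f x * deriv f x) / f x ^ 2 =
      deriv (deriv f) x / f x - (deriv f x / f x) ^ 2 := by
    have := hne x hx'
    field_simp
  rw [hsplit]
  refine norm_sub_le_of_le ?_ ?_
  · rw [norm_div]
    exact div_le_div₀ hB₀ (hB x hx') hm (hfm x hx')
  · rw [norm_pow, norm_div]
    exact pow_le_pow_left₀ (by positivity) (div_le_div₀ hA₀ (hA x hx') hm (hfm x hx')) 2

lemma norm_LFunction_sub_LFunction_le {N : ℕ} [NeZero N] {χ : DirichletCharacter ℂ N}
    (hχ : χ.IsPrimitive) (hχ₁ : χ ≠ 1) (hN : Real.exp 1 ≤ N) {s t : ℝ} (hs : 1 ≤ s) (hst : s ≤ t) :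
    ‖χ.LFunction t - χ.LFunction s‖ ≤ 2 * (1 + Real.log N) ^ 2 * (t - s) := by
  refine norm_image_sub_le_of_norm_deriv_le_segment' (f := fun u : ℝ ↦ χ.LFunction u)
    (f' := fun u : ℝ ↦ deriv χ.LFunction u) (fun x _ ↦ ?_) (fun x hx ↦ ?_) t ⟨hst, le_rfl⟩
  · have hdiff := DirichletCharacter.differentiable_LFunction hχ₁
    exact (hdiff x).hasDerivAt.comp_ofReal.hasDerivWithinAt
  · rw [← iteratedDeriv_one]
    exact norm_iteratedDeriv_LFunction_le hχ hχ₁ (by simpa using hN) (hs.trans hx.1)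

/-- A length, of order `(log q)⁻⁹`, such that the 3-4-1 inequality keeps `L(s, χ)` away from `0` on
`[1, 1 + zeroFreeWidth q]` for all `χ` mod `q` with `χ ^ 2 ≠ 1`. It is the `σ` at which the lower
bound for `‖L(1 + σ, χ)‖ ^ 4`, of order `σ ^ 3 / log q`, matches the fourth power of the variation
of `L(s, χ)` on `[1, 1 + σ]`, which is at most of order `σ * (log q) ^ 2`. -/
noncomputable def zeroFreeWidth (q : ℕ) : ℝ := 1 / (2 ^ 12 * (1 + Real.log q) ^ 9)

lemma zeroFreeWidth_pos (q : ℕ) : 0 < zeroFreeWidth q := by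
  have := Real.log_natCast_nonneg q
  unfold zeroFreeWidth
  positivity

lemma zeroFreeWidth_le_one (q : ℕ) : zeroFreeWidth q ≤ 1 := by
  have := Real.log_natCast_nonneg q
  refine div_le_one_of_le₀ (one_le_mul_of_one_le_of_one_le (by norm_num) ?_) (by positivity)
  exact one_le_pow₀ (by linarith)

section NonrealCharacter

variable {q : ℕ} [Fact q.Prime] {χ : DirichletCharacter ℂ q}

lemma one_le_norm_LFunction_pow_four (hχ : χ ^ 2 ≠ 1) {σ : ℝ} (hσ₀ : 0 < σ) (hσ₁ : σ ≤ 1) :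
    1 ≤ (2 / σ) ^ 3 * ‖χ.LFunction (1 + σ)‖ ^ 4 * (2 * (1 + Real.log q)) := by
  have h341 := DirichletCharacter.norm_LFunction_product_ge_one χ hσ₀ 0
  simp only [Complex.ofReal_zero, mul_zero, add_zero, norm_mul, norm_pow] at h341
  have hprincipal : ‖DirichletCharacter.LFunctionTrivChar q (1 + σ)‖ ≤ 2 / σ := by
    have h := norm_LFunction_le_div_sub_one (1 : DirichletCharacter ℂ q) (s := 1 + σ) (by linarith)
    rw [add_sub_cancel_left] at h
    push_cast at h
    exact h.trans (by gcongr; linarith)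
  have hsq := norm_iteratedDeriv_LFunction_le (isPrimitive_of_prime hχ) hχ (k := 0)
    (by simpa using (Fact.out : q.Prime).one_le) (s := 1 + σ) (by linarith)
  simp only [iteratedDeriv_zero, zero_add, pow_one] at hsq
  push_cast at hsq
  refine h341.le.trans ?_
  gcongr

lemma four_mul_zeroFreeWidth_le_norm_LFunction (hχ : χ ^ 2 ≠ 1) :
    4 * zeroFreeWidth q * (1 + Real.log q) ^ 2 ≤ ‖χ.LFunction (1 + zeroFreeWidth q)‖ := by
  have hσ := zeroFreeWidth_pos q
  have hlog := Real.log_natCast_nonneg q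
  have h341 := one_le_norm_LFunction_pow_four hχ hσ (zeroFreeWidth_le_one q)
  refine le_of_pow_le_pow_left₀ four_ne_zero (norm_nonneg _) ?_
  rw [mul_right_comm, ← div_le_iff₀' (by positivity)] at h341
  refine le_trans (le_of_eq ?_) h341
  have : 0 < 1 + Real.log q := by linarith
  unfold zeroFreeWidth
  field_simp
  norm_num

lemma two_mul_zeroFreeWidth_le_norm_LFunction (hq : Real.exp 1 ≤ q) (hχ : χ ^ 2 ≠ 1) {s : ℝ}
    (hs : s ∈ Set.Icc 1 (1 + zeroFreeWidth q)) :
    2 * zeroFreeWidth q * (1 + Real.log q) ^ 2 ≤ ‖χ.LFunction s‖ := by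
  have hχ₁ : χ ≠ 1 := fun h ↦ hχ (by rw [h, one_pow])
  have hend := four_mul_zeroFreeWidth_le_norm_LFunction hχ
  have hlip := norm_LFunction_sub_LFunction_le (isPrimitive_of_prime hχ₁) hχ₁ hq hs.1 hs.2
  have htri := norm_sub_norm_le (χ.LFunction (1 + zeroFreeWidth q : ℝ)) (χ.LFunction s)
  push_cast at hlip htri
  nlinarith [mul_nonneg (sq_nonneg (1 + Real.log q)) (sub_nonneg.2 hs.1)]

lemma norm_logDeriv_LFunction_sub_le (hq : Real.exp 2 ≤ q) (hχ : χ ^ 2 ≠ 1) {δ : ℝ} (hδ₀ : 0 ≤ δ)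
    (hδ : δ ≤ zeroFreeWidth q) :
    ‖logDeriv χ.LFunction ((1 + δ : ℝ) : ℂ) - logDeriv χ.LFunction 1‖ ≤
      2 ^ 25 * (1 + Real.log q) ^ 18 * δ := by
  have hχ₁ : χ ≠ 1 := fun h ↦ hχ (by rw [h, one_pow])
  have hprim := isPrimitive_of_prime hχ₁
  have hq' : Real.exp 1 ≤ q := (Real.exp_le_exp.2 one_le_two).trans hq
  have hσ := zeroFreeWidth_pos q
  have hℓ₁ : 1 ≤ 1 + Real.log q := le_add_of_nonneg_right (Real.log_natCast_nonneg q)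
  have hbound := norm_logDeriv_sub_logDeriv_le (a := 1) (b := 1 + δ)
    (m := 2 * zeroFreeWidth q * (1 + Real.log q) ^ 2) (A := 2 * (1 + Real.log q) ^ 2)
    (B := 2 * (1 + Real.log q) ^ 3) (DirichletCharacter.differentiable_LFunction hχ₁)
    (by linarith) (by positivity)
    (fun x hx ↦ two_mul_zeroFreeWidth_le_norm_LFunction hq' hχ ⟨hx.1, by linarith [hx.2]⟩)
    (fun x hx ↦ by
      simpa using norm_iteratedDeriv_LFunction_le hprim hχ₁ (k := 1) (by simpa using hq') hx.1)
    (fun x hx ↦ by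
      simpa [iteratedDeriv_succ] using
        norm_iteratedDeriv_LFunction_le hprim hχ₁ (k := 2) (by simpa using hq) hx.1)
  rw [add_sub_cancel_left, Complex.ofReal_one] at hbound
  refine hbound.trans (mul_le_mul_of_nonneg_right ?_ hδ₀)
  set ℓ := 1 + Real.log q with hℓ
  calc 2 * ℓ ^ 3 / (2 * zeroFreeWidth q * ℓ ^ 2) + (2 * ℓ ^ 2 / (2 * zeroFreeWidth q * ℓ ^ 2)) ^ 2
      = 2 ^ 12 * ℓ ^ 10 + 2 ^ 24 * ℓ ^ 18 := by
        unfold zeroFreeWidth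
        rw [← hℓ]
        field_simp
    _ ≤ 2 ^ 12 * ℓ ^ 18 + 2 ^ 24 * ℓ ^ 18 := by
        gcongr
        norm_num
    _ ≤ 2 ^ 25 * ℓ ^ 18 := by nlinarith [pow_pos (zero_lt_one.trans_le hℓ₁) 18]

end NonrealCharacter

/-! ### Values at `1` of real characters -/

lemma zetaMul_eq_sum_divisors {N : ℕ} (χ : DirichletCharacter ℂ N) (n : ℕ) :
    χ.zetaMul n = ∑ d ∈ n.divisors, χ d := by
  rw [DirichletCharacter.zetaMul, ArithmeticFunction.coe_zeta_mul_apply]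
  exact Finset.sum_congr rfl fun d hd ↦ if_neg (Nat.pos_of_mem_divisors hd).ne'

open scoped ComplexOrder in
lemma one_le_zetaMul_sq {N : ℕ} {χ : DirichletCharacter ℂ N} (hχ : χ ^ 2 = 1) {m : ℕ}
    (hm : m ≠ 0) : 1 ≤ χ.zetaMul (m ^ 2) := by
  rw [χ.isMultiplicative_zetaMul.multiplicative_factorization _ (pow_ne_zero 2 hm),
    Nat.factorization_pow, Finsupp.prod, ← Finset.prod_const_one]
  refine Finset.prod_le_prod (fun _ _ ↦ zero_le_one) fun p hp ↦ ?_
  have hp' : p.Prime := Nat.prime_of_mem_primeFactors (Nat.factorization_pow m 2 ▸ hp)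
  rw [Finsupp.smul_apply, smul_eq_mul, zetaMul_eq_sum_divisors, Nat.sum_divisors_prime_pow hp']
  simp only [Nat.cast_pow, map_pow]
  rcases MulChar.isQuadratic_iff_sq_eq_one.mpr hχ p with h₀ | h₁ | hneg
  · simp [h₀, Finset.sum_range_succ']
  · simp only [h₁, one_pow, Finset.sum_const, Finset.card_range, nsmul_eq_mul, mul_one]
    exact_mod_cast Nat.succ_le_succ (Nat.zero_le _)
  · simp [hneg, neg_one_geom_sum, parity_simps]

lemma mul_pow_le_geom_sum_sq (w : ℝ) (n : ℕ) :
    (n + 1) * w ^ n ≤ ∑ i ∈ Finset.range (n + 1), (w ^ 2) ^ i := by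
  have hreflect := Finset.sum_range_reflect (fun i ↦ (w ^ 2) ^ i) (n + 1)
  have hpair : ∑ i ∈ Finset.range (n + 1), 2 * w ^ n ≤
      ∑ i ∈ Finset.range (n + 1), ((w ^ 2) ^ i + (w ^ 2) ^ (n + 1 - 1 - i)) := by
    refine Finset.sum_le_sum fun i hi ↦ ?_
    rw [← Nat.add_sub_of_le (Finset.mem_range_succ_iff.1 hi), pow_add, Nat.add_sub_cancel,
      Nat.add_sub_cancel_left, pow_right_comm w 2 i, pow_right_comm w 2 (n - i), ← mul_assoc]
    exact two_mul_le_add_sq (w ^ i) (w ^ (n - i))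
  rw [Finset.sum_add_distrib, hreflect, Finset.sum_const, Finset.card_range, nsmul_eq_mul] at hpair
  push_cast at hpair
  linarith

lemma mul_pow_le_geom_sum_mul_geom_sum {z : ℝ} (hz₀ : 0 ≤ z) (hz₁ : z ≤ 1) (n : ℕ) :
    (n + 1) * (n + 2) * z ^ (n + 1) ≤
      (∑ i ∈ Finset.range (n + 1), z ^ i) * ∑ i ∈ Finset.range (n + 2), z ^ i := by
  obtain ⟨w, hw₀, rfl⟩ : ∃ w : ℝ, 0 ≤ w ∧ z = w ^ 2 :=
    ⟨√z, Real.sqrt_nonneg z, (Real.sq_sqrt hz₀).symm⟩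
  have hw₁ : w ≤ 1 := (pow_le_one_iff_of_nonneg hw₀ two_ne_zero).1 hz₁
  have hmul := mul_le_mul (mul_pow_le_geom_sum_sq w n) (mul_pow_le_geom_sum_sq w (n + 1))
    (by positivity) (by positivity)
  refine le_trans ?_ hmul
  push_cast
  calc ((n : ℝ) + 1) * (n + 2) * (w ^ 2) ^ (n + 1)
      = (n + 1) * (n + 2) * w ^ (2 * n + 1) * w := by ring
    _ ≤ (n + 1) * (n + 2) * w ^ (2 * n + 1) * 1 := by gcongr
    _ = (n + 1) * w ^ n * ((n + 1 + 1) * w ^ (n + 1)) := by ring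

/-- The difference between the coefficients of `χ (n + 1)` in `L(1, χ)` and in `1 - z` times the
Lambert series `dirichletLambert χ z`; the latter is `(1 - z) * z ^ (n + 1) / (1 - z ^ (n + 1))`,
written here with a geometric sum. -/
noncomputable def lambertDefect (z : ℝ) (n : ℕ) : ℝ :=
  ((n : ℝ) + 1)⁻¹ - z ^ (n + 1) / ∑ i ∈ Finset.range (n + 1), z ^ i

lemma lambertDefect_zero (z : ℝ) : lambertDefect z 0 = 1 - z := by
  simp [lambertDefect]

lemma lambertDefect_nonneg {z : ℝ} (hz₀ : 0 ≤ z) (hz₁ : z ≤ 1) (n : ℕ) : 0 ≤ lambertDefect z n := by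
  have hle : ((n : ℝ) + 1) * z ^ (n + 1) ≤ ∑ i ∈ Finset.range (n + 1), z ^ i := by
    simpa using (Finset.range (n + 1)).card_nsmul_le_sum _ (z ^ (n + 1)) fun i hi ↦
      pow_le_pow_of_le_one hz₀ hz₁ (Finset.mem_range_le hi)
  rw [lambertDefect, sub_nonneg, div_le_iff₀ (geom_sum_pos hz₀ n.succ_ne_zero),
    inv_mul_eq_div, le_div_iff₀' (by positivity)]
  exact hle

lemma antitone_lambertDefect {z : ℝ} (hz₀ : 0 ≤ z) (hz₁ : z ≤ 1) : Antitone (lambertDefect z) := by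
  refine antitone_nat_of_succ_le fun n ↦ ?_
  have hprod := mul_pow_le_geom_sum_mul_geom_sum hz₀ hz₁ n
  have hsucc := geom_sum_succ (x := z) (n := n + 1)
  unfold lambertDefect
  have hG := geom_sum_pos hz₀ n.succ_ne_zero
  have hG' := geom_sum_pos hz₀ (n + 1).succ_ne_zero
  set G := ∑ i ∈ Finset.range (n + 1), z ^ i
  set G' := ∑ i ∈ Finset.range (n + 1 + 1), z ^ i
  have hgeom : z ^ (n + 1) / G - z ^ (n + 1 + 1) / G' = z ^ (n + 1) / (G * G') := by
    field_simp
    rw [hsucc]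
    ring
  have hinv : ((n : ℝ) + 1)⁻¹ - ((n + 1 : ℕ) + 1 : ℝ)⁻¹ = 1 / ((n + 1) * (n + 2)) := by
    push_cast
    field_simp
    ring
  have hdiff : z ^ (n + 1) / (G * G') ≤ 1 / ((n + 1) * (n + 2)) := by
    rw [div_le_div_iff₀ (by positivity) (by positivity)]
    linarith
  linarith

/-- The Lambert series `∑ₙ (∑_{d ∣ n} χ d) zⁿ = ∑_d χ d * z ^ d / (1 - z ^ d)`, written as a double
series over the pairs `(d, n / d)`. -/
noncomputable def dirichletLambert {N : ℕ} (χ : DirichletCharacter ℂ N) (z : ℝ) : ℂ :=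
  ∑' c : ℕ+ × ℕ+, χ (c.1 : ℕ) * ((z ^ (c.1 * c.2 : ℕ) : ℝ) : ℂ)

section Lambert

variable {N : ℕ} (χ : DirichletCharacter ℂ N) {z : ℝ}

lemma hasSum_dirichletLambert (hz₀ : 0 ≤ z) (hz₁ : z < 1) :
    HasSum (fun c : ℕ+ × ℕ+ ↦ χ (c.1 : ℕ) * ((z ^ (c.1 * c.2 : ℕ) : ℝ) : ℂ))
      (dirichletLambert χ z) := by
  have hsum := summable_prod_mul_pow (𝕜 := ℝ) 0 (by rwa [Real.norm_of_nonneg hz₀])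
  refine (Summable.of_norm_bounded hsum fun c ↦ ?_).hasSum
  rw [norm_mul, Complex.norm_real, Real.norm_of_nonneg (by positivity), pow_zero]
  exact mul_le_mul_of_nonneg_right (χ.norm_le_one _) (by positivity)

lemma hasSum_dirichletLambert_geometric (hz₀ : 0 ≤ z) (hz₁ : z < 1) :
    HasSum (fun i : ℕ ↦ (z ^ (i + 1) / (1 - z ^ (i + 1)) : ℝ) • χ (1 + i : ℕ))
      (dirichletLambert χ z) := by
  have hfiber (d : ℕ+) : HasSum (fun c : ℕ+ ↦ χ (d : ℕ) * ((z ^ (d * c : ℕ) : ℝ) : ℂ))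
      (χ (d : ℕ) * ((z ^ (d : ℕ) / (1 - z ^ (d : ℕ)) : ℝ) : ℂ)) := by
    refine HasSum.mul_left _ (Complex.hasSum_ofReal.2 ?_)
    have hgeom := (hasSum_geometric_of_lt_one (pow_nonneg hz₀ d)
      (pow_lt_one₀ hz₀ hz₁ d.ne_zero)).mul_left (z ^ (d : ℕ))
    rw [← Equiv.pnatEquivNat.hasSum_iff] at hgeom
    refine hgeom.congr_fun fun c ↦ ?_
    change _ = z ^ (d : ℕ) * (z ^ (d : ℕ)) ^ c.natPred
    rw [← pow_succ', ← pow_mul, PNat.natPred_add_one]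
  have hsum := (hasSum_dirichletLambert χ hz₀ hz₁).prod_fiberwise hfiber
  rw [← Equiv.pnatEquivNat.symm.hasSum_iff] at hsum
  convert hsum using 2 with i
  simp [add_comm, mul_comm]

lemma hasSum_dirichletLambert_zetaMul (hz₀ : 0 ≤ z) (hz₁ : z < 1) :
    HasSum (fun n : ℕ+ ↦ χ.zetaMul n * ((z ^ (n : ℕ) : ℝ) : ℂ)) (dirichletLambert χ z) := by
  have hsum := hasSum_dirichletLambert χ hz₀ hz₁
  rw [← sigmaAntidiagonalEquivProd.hasSum_iff] at hsum
  convert hsum.sigma fun n ↦ hasSum_fintype _ using 2 with n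
  simp only [Function.comp, sigmaAntidiagonalEquivProd, divisorsAntidiagonalFactors,
    PNat.mk_coe, Equiv.coe_fn_mk]
  rw [Finset.univ_eq_attach, (n : ℕ).divisorsAntidiagonal.sum_attach
      fun x : ℕ × ℕ ↦ χ (x.1 : ZMod N) * ((z ^ (x.1 * x.2) : ℝ) : ℂ),
    zetaMul_eq_sum_divisors, Finset.sum_mul,
    Nat.sum_divisorsAntidiagonal fun x y ↦ χ (x : ZMod N) * ((z ^ (x * y) : ℝ) : ℂ)]
  refine Finset.sum_congr rfl fun d hd ↦ ?_
  rw [Nat.mul_div_cancel' (Nat.dvd_of_mem_divisors hd)]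

end Lambert

lemma mul_pow_sq_le_re_dirichletLambert {N : ℕ} {χ : DirichletCharacter ℂ N} (hχ : χ ^ 2 = 1)
    {z : ℝ} (hz₀ : 0 ≤ z) (hz₁ : z < 1) (M : ℕ) :
    M * z ^ (M ^ 2) ≤ (dirichletLambert χ z).re := by
  have hsum := Complex.hasSum_re (hasSum_dirichletLambert_zetaMul χ hz₀ hz₁)
  simp only [Complex.re_mul_ofReal] at hsum
  have hnonneg (n : ℕ) : 0 ≤ (χ.zetaMul n).re :=
    (Complex.le_def.1 (DirichletCharacter.zetaMul_nonneg hχ n)).1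
  have hsq (m : ℕ) : 1 ≤ (χ.zetaMul ((m + 1) ^ 2)).re :=
    (Complex.le_def.1 (one_le_zetaMul_sq hχ m.succ_ne_zero)).1
  have hinj : Set.InjOn (fun i : ℕ ↦ i.succPNat ^ 2) (Finset.range M) := by
    intro a _ b _ hab
    exact Nat.succPNat_injective (PNat.eq (Nat.pow_left_injective two_ne_zero
      (congrArg PNat.val hab)))
  have hle := sum_le_hasSum (ι := ℕ+) ((Finset.range M).image fun i : ℕ ↦ i.succPNat ^ 2)
    (fun n _ ↦ mul_nonneg (hnonneg n) (pow_nonneg hz₀ n)) hsum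
  refine le_trans ?_ hle
  rw [Finset.sum_image hinj]
  calc (M : ℝ) * z ^ (M ^ 2) = ∑ i ∈ Finset.range M, 1 * z ^ (M ^ 2) := by simp
    _ ≤ ∑ i ∈ Finset.range M, (χ.zetaMul ((i + 1) ^ 2)).re * z ^ ((i + 1) ^ 2) :=
        Finset.sum_le_sum fun i hi ↦ mul_le_mul (hsq i)
          (pow_le_pow_of_le_one hz₀ hz₁.le (Nat.pow_le_pow_left (Finset.mem_range.1 hi) 2))
          (pow_nonneg hz₀ _) (zero_le_one.trans (hsq i))

section PrimitiveCharacter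

variable {N : ℕ} [NeZero N] {χ : DirichletCharacter ℂ N}

lemma tendsto_sum_range_smul_LFunction_one (hχ : χ.IsPrimitive) (hχ₁ : χ ≠ 1) :
    Tendsto (fun M : ℕ ↦ ∑ i ∈ Finset.range M, ((i : ℝ) + 1)⁻¹ • χ (1 + i : ℕ)) atTop
      (𝓝 (χ.LFunction 1)) := by
  have htail : Tendsto (fun M : ℕ ↦ ((M + 1 : ℕ) : ℝ)⁻¹ * (√N * (1 + Real.log N))) atTop (𝓝 0) := by
    simpa using ((tendsto_inv_atTop_nhds_zero_nat (𝕜 := ℝ)).comp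
      (tendsto_add_atTop_nat 1)).mul_const (√N * (1 + Real.log N))
  refine tendsto_iff_norm_sub_tendsto_zero.2 (squeeze_zero (fun _ ↦ norm_nonneg _) (fun M ↦ ?_)
    htail)
  have hbound := norm_LFunction_sub_sum_range_le hχ hχ₁ M.succ_pos (le_refl (1 : ℝ))
  simp only [Real.rpow_neg_one, Complex.ofReal_one] at hbound
  rw [norm_sub_rev]
  refine le_trans (le_of_eq ?_) hbound
  simp [Finset.sum_range_succ', add_comm]

lemma norm_LFunction_one_sub_dirichletLambert_le (hχ : χ.IsPrimitive) (hχ₁ : χ ≠ 1) {z : ℝ}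
    (hz₀ : 0 ≤ z) (hz₁ : z < 1) :
    ‖χ.LFunction 1 - (1 - z) • dirichletLambert χ z‖ ≤ (1 - z) * (√N * (1 + Real.log N)) := by
  have htendsto := (tendsto_sum_range_smul_LFunction_one hχ hχ₁).sub
    ((hasSum_dirichletLambert_geometric χ hz₀ hz₁).const_smul (1 - z)).tendsto_sum_nat
  refine le_of_tendsto htendsto.norm (Eventually.of_forall fun M ↦ ?_)
  have habel := norm_sum_range_smul_le_of_antitone
    (norm_sum_range_dirichletCharacter_le hχ hχ₁ 1) (antitone_lambertDefect hz₀ hz₁.le)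
    (lambertDefect_nonneg hz₀ hz₁.le) M
  rw [lambertDefect_zero] at habel
  refine le_trans (le_of_eq ?_) habel
  rw [← Finset.sum_sub_distrib]
  congr 1
  refine Finset.sum_congr rfl fun i _ ↦ ?_
  have hz : 0 < 1 - z := sub_pos.2 hz₁
  rw [smul_smul, ← sub_smul, lambertDefect, ← geom_sum_mul_neg]
  congr 2
  field_simp

lemma inv_le_norm_LFunction_one (hχ : χ.IsPrimitive) (hχ₁ : χ ≠ 1) (hχ₂ : χ ^ 2 = 1) :
    (40 * (√N * (1 + Real.log N)))⁻¹ ≤ ‖χ.LFunction 1‖ := by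
  set B := √N * (1 + Real.log N) with hB
  have hB₁ : 1 ≤ B := one_le_mul_of_one_le_of_one_le
    (Real.one_le_sqrt.2 (mod_cast NeZero.one_le))
    (le_add_of_nonneg_right (Real.log_natCast_nonneg N))
  obtain ⟨M, hM, hM'⟩ : ∃ M : ℕ, 4 * B ≤ M ∧ (M : ℝ) ≤ 5 * B :=
    ⟨⌈4 * B⌉₊, Nat.le_ceil _, by linarith [Nat.ceil_lt_add_one (by linarith : 0 ≤ 4 * B)]⟩
  have hM₁ : (1 : ℝ) ≤ M := by linarith
  -- With `1 - z = 1 / (2 * M ^ 2)` the powers `z ^ (m ^ 2)`, `m ≤ M`, are bounded below.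
  set x : ℝ := 1 / (2 * (M : ℝ) ^ 2) with hx
  have hx₀ : 0 < x := by positivity
  have hx₁ : x ≤ 1 := div_le_one_of_le₀ (by nlinarith) (by positivity)
  have hlower := (mul_pow_sq_le_re_dirichletLambert hχ₂ (z := 1 - x) (by linarith) (by linarith)
    M).trans (Complex.re_le_norm _)
  have hpow : 1 / 2 ≤ (1 - x) ^ (M ^ 2) := by
    have hbernoulli := one_add_mul_le_pow (a := -x) (by linarith) (M ^ 2)
    have : ((M ^ 2 : ℕ) : ℝ) * -x = -(1 / 2) := by
      rw [hx]
      push_cast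
      field_simp
    rw [← sub_eq_add_neg] at hbernoulli
    linarith
  have hupper := norm_LFunction_one_sub_dirichletLambert_le hχ hχ₁ (z := 1 - x) (by linarith)
    (by linarith)
  rw [sub_sub_cancel, ← hB] at hupper
  have htri := norm_le_norm_add_norm_sub (χ.LFunction 1) (x • dirichletLambert χ (1 - x))
  rw [norm_smul, Real.norm_of_nonneg hx₀.le] at htri
  calc (40 * B)⁻¹ ≤ (8 * (M : ℝ))⁻¹ := inv_anti₀ (by positivity) (by linarith)
    _ = x * (M * (1 / 2) - M / 4) := by
        rw [hx]
        field_simp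
        norm_num
    _ ≤ x * (M * (1 - x) ^ (M ^ 2) - B) := by
        gcongr
        linarith
    _ ≤ ‖χ.LFunction 1‖ := by linarith [mul_le_mul_of_nonneg_left hlower hx₀.le]

end PrimitiveCharacter

/-! ### Characters trivial on the `m`-th roots of unity -/

/-- The group `X_m` of the Dirichlet characters mod `N` that are trivial on the group `C_m` of the
`m`-th roots of unity mod `N`. -/
noncomputable def charsTrivialOn (N m : ℕ) [NeZero N] : Finset (DirichletCharacter ℂ N) :=
  (Set.toFinite {χ : DirichletCharacter ℂ N | ∀ a : ZMod N, a ^ m = 1 → χ a = 1}).toFinset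

section Orthogonality

variable {N m : ℕ} [NeZero N]

lemma mem_charsTrivialOn {χ : DirichletCharacter ℂ N} :
    χ ∈ charsTrivialOn N m ↔ ∀ a : ZMod N, a ^ m = 1 → χ a = 1 := by
  simp [charsTrivialOn]

lemma one_mem_charsTrivialOn (hm : m ≠ 0) : 1 ∈ charsTrivialOn N m :=
  mem_charsTrivialOn.2 fun _ ha ↦ MulChar.one_apply (IsUnit.of_pow_eq_one ha hm)

lemma pow_mul_mem_charsTrivialOn_iff (hm : m ≠ 0) {ψ χ : DirichletCharacter ℂ N} :
    ψ ^ m * χ ∈ charsTrivialOn N m ↔ χ ∈ charsTrivialOn N m := by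
  simp only [mem_charsTrivialOn]
  refine forall₂_congr fun b hb ↦ ?_
  rw [MulChar.mul_apply, MulChar.pow_apply' _ hm, ← map_pow, hb, map_one, one_mul]

lemma sum_charsTrivialOn_apply (hm : m ≠ 0) (a : ZMod N) :
    ∑ χ ∈ charsTrivialOn N m, χ a = if a ^ m = 1 then ((charsTrivialOn N m).card : ℂ) else 0 := by
  split_ifs with ha
  · rw [Finset.sum_congr rfl fun χ hχ ↦ mem_charsTrivialOn.1 hχ a ha]
    simp
  obtain ⟨ψ, hψ⟩ := DirichletCharacter.exists_apply_ne_one_of_hasEnoughRootsOfUnity ℂ (n := N) ha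
  have hinvariant : ∑ χ ∈ charsTrivialOn N m, χ a = ψ (a ^ m) * ∑ χ ∈ charsTrivialOn N m, χ a := by
    rw [Finset.mul_sum]
    refine (Finset.sum_equiv (Equiv.mulLeft (ψ ^ m))
      (fun χ ↦ (pow_mul_mem_charsTrivialOn_iff hm).symm) fun χ _ ↦ ?_).symm
    rw [Equiv.coe_mulLeft, MulChar.mul_apply, MulChar.pow_apply' _ hm, map_pow]
  by_contra hne
  exact hψ (mul_right_cancel₀ hne (hinvariant.symm.trans (one_mul _).symm))

lemma card_charsTrivialOn_mul_card (hm : m ≠ 0) :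
    (charsTrivialOn N m).card * {a : ZMod N | a ^ m = 1}.ncard = N.totient := by
  have hsum : ∑ a : ZMod N, ∑ χ ∈ charsTrivialOn N m, χ a =
      (charsTrivialOn N m).card * {a : ZMod N | a ^ m = 1}.ncard := by
    simp_rw [sum_charsTrivialOn_apply hm]
    rw [← Finset.sum_filter, Finset.sum_const, nsmul_eq_mul, mul_comm,
      Set.ncard_eq_toFinset_card']
    simp
  rw [Finset.sum_comm, Finset.sum_eq_single_of_mem _ (one_mem_charsTrivialOn hm)
    fun χ _ hχ ↦ MulChar.sum_eq_zero_of_ne_one hχ, MulChar.sum_one_eq_card_units,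
    ZMod.card_units_eq_totient] at hsum
  exact_mod_cast hsum.symm

end Orthogonality

section PrimeModulus

variable {q : ℕ} [Fact q.Prime]

lemma ncard_pow_eq_one {m : ℕ} (hm : m ∣ q - 1) : {a : ZMod q | a ^ m = 1}.ncard = m := by
  have hq : 0 < q - 1 := Nat.sub_pos_of_lt (Fact.out : q.Prime).one_lt
  have hm₀ : 0 < m := Nat.pos_of_dvd_of_pos hm hq
  obtain ⟨g, hg⟩ := IsCyclic.exists_ofOrder_eq_natCard (α := (ZMod q)ˣ)
  rw [Nat.card_eq_fintype_card, ZMod.card_units] at hg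
  have hprim : IsPrimitiveRoot (g : ZMod q) (q - 1) := by
    rw [← hg, IsPrimitiveRoot.coe_units_iff]
    exact IsPrimitiveRoot.orderOf g
  obtain ⟨e, he⟩ := hm
  have hprim_pow : IsPrimitiveRoot ((g : ZMod q) ^ e) m := hprim.pow hq (by rw [he, mul_comm])
  have hset : {a : ZMod q | a ^ m = 1} = Polynomial.nthRootsFinset m (1 : ZMod q) := by
    ext a
    simp [Polynomial.mem_nthRootsFinset hm₀]
  rw [hset, Set.ncard_coe_finset, hprim_pow.card_nthRootsFinset]

lemma card_charsTrivialOn_mul {m : ℕ} (hm : m ∣ q - 1) :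
    (charsTrivialOn q m).card * m = q - 1 := by
  have hm₀ : m ≠ 0 := ne_zero_of_dvd_ne_zero
    (Nat.sub_pos_of_lt (Fact.out : q.Prime).one_lt).ne' hm
  simpa [ncard_pow_eq_one hm, Nat.totient_prime (Fact.out : q.Prime)] using
    card_charsTrivialOn_mul_card (N := q) hm₀

lemma eq_of_ne_one_of_sq_eq_one {χ ψ : DirichletCharacter ℂ q} (hχ : χ ≠ 1) (hχ₂ : χ ^ 2 = 1)
    (hψ : ψ ≠ 1) (hψ₂ : ψ ^ 2 = 1) : χ = ψ := by
  obtain ⟨e⟩ := DirichletCharacter.mulEquiv_units ℂ q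
  have eq_neg_one {φ : DirichletCharacter ℂ q} (hφ : φ ≠ 1) (hφ₂ : φ ^ 2 = 1) :
      (e φ : ZMod q) = -1 := by
    have hsq : (e φ : ZMod q) ^ 2 = 1 := by
      rw [← Units.val_pow_eq_pow_val, ← map_pow, hφ₂, map_one, Units.val_one]
    exact (sq_eq_one_iff.1 hsq).resolve_left fun h ↦ hφ (e.map_eq_one_iff.1 (Units.ext h))
  exact e.injective (Units.ext ((eq_neg_one hχ hχ₂).trans (eq_neg_one hψ hψ₂).symm))

end PrimeModulus

/-! ### The Euler–Kronecker constants `γ_{K_m}` -/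

lemma Lfun_eq_LFunction {N : ℕ} [NeZero N] (χ : DirichletCharacter ℂ N) :
    Lfun χ = χ.LFunction := by
  funext s
  rw [Lfun, dif_neg (NeZero.ne N)]

lemma gammaK_eq_re_sum {N m : ℕ} [NeZero N] (hm : m ≠ 0) :
    gammaK N m = Real.eulerMascheroniConstant + (∑ χ ∈ charsTrivialOn N m, logDeriv χ.LFunction 1 -
      logDeriv (1 : DirichletCharacter ℂ N).LFunction 1).re := by
  classical
  have hset : {χ : DirichletCharacter ℂ N | χ ≠ 1 ∧ ∀ a : ZMod N, a ^ m = 1 → χ a = 1} =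
      ((charsTrivialOn N m).erase 1 : Finset (DirichletCharacter ℂ N)) := by
    ext χ
    simp [mem_charsTrivialOn, and_comm]
  rw [gammaK, hset, finsum_mem_coe_finset, ← Finset.sum_erase_eq_sub (one_mem_charsTrivialOn hm)]
  simp only [Lfun_eq_LFunction, logDeriv_apply]

lemma hasSum_neg_sum_logDeriv_LFunction {N m : ℕ} [NeZero N] (hm : m ≠ 0) {s : ℝ} (hs : 1 < s) :
    HasSum (fun n : ℕ ↦ (if (n : ZMod N) ^ m = 1 then ((charsTrivialOn N m).card : ℂ) else 0) *
        ((ArithmeticFunction.vonMangoldt n / (n : ℝ) ^ s : ℝ) : ℂ))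
      (-∑ χ ∈ charsTrivialOn N m, logDeriv χ.LFunction s) := by
  simpa only [Finset.sum_neg_distrib, ← Finset.sum_mul, sum_charsTrivialOn_apply hm] using
    hasSum_sum (s := charsTrivialOn N m) fun χ _ ↦ hasSum_neg_logDeriv_LFunction χ hs

section PrimeModulus

variable {q : ℕ} [Fact q.Prime]

lemma card_charsTrivialOn_eq_two_mul {r : ℕ} (hr : 2 * r ∣ q - 1) :
    (charsTrivialOn q r).card = 2 * (charsTrivialOn q (2 * r)).card := by
  have hq : 0 < q - 1 := Nat.sub_pos_of_lt (Fact.out : q.Prime).one_lt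
  have hr₀ : 0 < r := Nat.pos_of_mul_pos_left (Nat.pos_of_dvd_of_pos hr hq)
  have h := card_charsTrivialOn_mul (q := q) (dvd_of_mul_left_dvd hr)
  rw [← card_charsTrivialOn_mul hr] at h
  exact Nat.eq_of_mul_eq_mul_right hr₀ (by linarith)

lemma re_two_mul_sum_logDeriv_sub_le {r : ℕ} (hr : 2 * r ∣ q - 1) {s : ℝ} (hs : 1 < s) :
    (2 * ∑ χ ∈ charsTrivialOn q (2 * r), logDeriv χ.LFunction s -
      ∑ χ ∈ charsTrivialOn q r, logDeriv χ.LFunction s).re ≤ 0 := by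
  have hq : 0 < q - 1 := Nat.sub_pos_of_lt (Fact.out : q.Prime).one_lt
  have h2r₀ : 2 * r ≠ 0 := (Nat.pos_of_dvd_of_pos hr hq).ne'
  have hr₀ : r ≠ 0 := right_ne_zero_of_mul h2r₀
  have hsum := Complex.hasSum_re (((hasSum_neg_sum_logDeriv_LFunction (N := q) h2r₀ hs).mul_left
    2).sub (hasSum_neg_sum_logDeriv_LFunction (N := q) hr₀ hs))
  rw [mul_neg, ← neg_sub', Complex.neg_re] at hsum
  refine nonpos_of_neg_nonneg (hsum.nonneg fun n ↦ ?_)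
  rw [← mul_assoc, ← sub_mul, Complex.re_mul_ofReal]
  refine mul_nonneg ?_ (div_nonneg ArithmeticFunction.vonMangoldt_nonneg (by positivity))
  rw [card_charsTrivialOn_eq_two_mul hr]
  by_cases hn : (n : ZMod q) ^ r = 1
  · have hn' : (n : ZMod q) ^ (2 * r) = 1 := by rw [mul_comm, pow_mul, hn, one_pow]
    simp [hn, hn']
  · rw [if_neg hn]
    split_ifs <;> simp

lemma norm_logDeriv_LFunction_one_le_of_sq_eq_one (hq : Real.exp 1 ≤ q)
    {χ : DirichletCharacter ℂ q} (hχ : χ ≠ 1) (hχ₂ : χ ^ 2 = 1) :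
    ‖logDeriv χ.LFunction 1‖ ≤ 80 * √q * (1 + Real.log q) ^ 3 := by
  have hprim := isPrimitive_of_prime hχ
  have hlower := inv_le_norm_LFunction_one hprim hχ hχ₂
  have hupper := norm_iteratedDeriv_LFunction_le hprim hχ (k := 1) (by simpa using hq)
    (le_refl (1 : ℝ))
  rw [iteratedDeriv_one, Complex.ofReal_one] at hupper
  have : 0 < √(q : ℝ) := Real.sqrt_pos.2 (mod_cast (Fact.out : q.Prime).pos)
  have : 0 < 1 + Real.log q := by linarith [Real.log_natCast_nonneg q]
  set ℓ := 1 + Real.log q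
  rw [logDeriv_apply, norm_div]
  calc _ ≤ 2 * ℓ ^ (1 + 1) / (40 * (√q * ℓ))⁻¹ :=
        div_le_div₀ (by positivity) hupper (by positivity) hlower
    _ = 80 * √q * ℓ ^ 3 := by
        rw [div_inv_eq_mul]
        ring

lemma norm_sum_charsTrivialOn_sub_le {m : ℕ} (hm : m ≠ 0) {F : DirichletCharacter ℂ q → ℂ}
    {a b : ℝ} (ha : 0 ≤ a) (hb : 0 ≤ b) (hFa : ∀ χ, χ ^ 2 ≠ 1 → ‖F χ‖ ≤ a)
    (hFb : ∀ χ, χ ≠ 1 → χ ^ 2 = 1 → ‖F χ‖ ≤ b) :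
    ‖∑ χ ∈ charsTrivialOn q m, F χ - F 1‖ ≤ (charsTrivialOn q m).card * a + b := by
  classical
  rw [← Finset.sum_erase_eq_sub (one_mem_charsTrivialOn hm)]
  have hle (χ) (hχ : χ ∈ (charsTrivialOn q m).erase 1) :
      ‖F χ‖ ≤ a + if χ ^ 2 = 1 then b else 0 := by
    split_ifs with hχ₂
    · linarith [hFb χ (Finset.ne_of_mem_erase hχ) hχ₂]
    · linarith [hFa χ hχ₂]
  refine (norm_sum_le_of_le _ hle).trans ?_
  rw [Finset.sum_add_distrib, ← Finset.sum_filter, Finset.sum_const, Finset.sum_const,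
    nsmul_eq_mul, nsmul_eq_mul]
  have hquadratic : (((charsTrivialOn q m).erase 1).filter fun χ ↦ χ ^ 2 = 1).card ≤ 1 := by
    simp only [Finset.card_le_one, Finset.mem_filter, Finset.mem_erase]
    rintro χ ⟨⟨hχ, -⟩, hχ₂⟩ ψ ⟨⟨hψ, -⟩, hψ₂⟩
    exact eq_of_ne_one_of_sq_eq_one hχ hχ₂ hψ hψ₂
  refine add_le_add (mul_le_mul_of_nonneg_right ?_ ha) (mul_le_of_le_one_left hb ?_)
  · exact_mod_cast Finset.card_erase_le
  · exact_mod_cast hquadratic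

lemma abs_gammaK_sub_re_sum_le (hq : Real.exp 2 ≤ q) {m : ℕ} (hm : m ≠ 0) {δ : ℝ} (hδ₀ : 0 < δ)
    (hδ : δ ≤ zeroFreeWidth q) (hζ : ‖logDeriv riemannZeta ((1 + δ : ℝ) : ℂ)‖ ≤ 2 / δ) :
    |gammaK q m - (Real.eulerMascheroniConstant +
        (∑ χ ∈ charsTrivialOn q m, logDeriv χ.LFunction ((1 + δ : ℝ) : ℂ)).re)| ≤
      (charsTrivialOn q m).card * (2 ^ 25 * (1 + Real.log q) ^ 18 * δ) +
        (80 * √q * (1 + Real.log q) ^ 3 + 4 / δ) := by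
  have := Real.log_natCast_nonneg q
  have hle (χ : DirichletCharacter ℂ q) : ‖logDeriv χ.LFunction ((1 + δ : ℝ) : ℂ)‖ ≤ 2 / δ :=
    (norm_logDeriv_LFunction_le χ (by linarith)).trans hζ
  have hdiff := norm_sum_charsTrivialOn_sub_le hm
    (F := fun χ ↦ logDeriv χ.LFunction 1 - logDeriv χ.LFunction ((1 + δ : ℝ) : ℂ))
    (a := 2 ^ 25 * (1 + Real.log q) ^ 18 * δ) (b := 80 * √q * (1 + Real.log q) ^ 3 + 2 / δ)
    (by positivity) (by positivity)
    (fun χ hχ ↦ by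
      rw [norm_sub_rev]
      exact norm_logDeriv_LFunction_sub_le hq hχ hδ₀.le hδ)
    (fun χ hχ hχ₂ ↦ norm_sub_le_of_le (norm_logDeriv_LFunction_one_le_of_sq_eq_one
      ((Real.exp_le_exp.2 one_le_two).trans hq) hχ hχ₂) (hle χ))
  have htotal := norm_sub_le_of_le hdiff (hle 1)
  rw [gammaK_eq_re_sum hm, add_sub_add_left_eq_sub, ← Complex.sub_re]
  refine (Complex.abs_re_le_norm _).trans (le_trans (le_of_eq ?_) (htotal.trans (le_of_eq ?_)))
  · rw [Finset.sum_sub_distrib]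
    congr 1
    ring
  · ring

end PrimeModulus

lemma isLittleO_one_add_log_pow_sqrt (n : ℕ) :
    (fun x ↦ (1 + Real.log x) ^ n) =o[atTop] Real.sqrt := by
  have hlog : (fun x ↦ 1 + Real.log x) =O[atTop] Real.log :=
    Real.isLittleO_const_log_atTop.isBigO.add (Asymptotics.isBigO_refl _ _)
  refine (hlog.pow n).trans_isLittleO ?_
  simpa only [Real.rpow_natCast, ← Real.sqrt_eq_rpow] using
    isLittleO_log_rpow_rpow_atTop (n : ℝ) one_half_pos

lemma eventually_inv_sqrt_le_zeroFreeWidth : ∀ᶠ q : ℕ in atTop, (√q)⁻¹ ≤ zeroFreeWidth q := by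
  have hlog := (isLittleO_one_add_log_pow_sqrt 9).bound (show (0 : ℝ) < 1 / 2 ^ 12 by positivity)
  filter_upwards [tendsto_natCast_atTop_atTop.eventually hlog] with q hq
  have hℓ : 0 < 1 + Real.log q := by linarith [Real.log_natCast_nonneg q]
  rw [Real.norm_of_nonneg (by positivity), Real.norm_of_nonneg (Real.sqrt_nonneg _)] at hq
  rw [zeroFreeWidth, one_div]
  exact inv_anti₀ (by positivity) (by linarith)

lemma eventually_abs_gammaK_sub_re_sum_le : ∀ᶠ q : ℕ in atTop, ∀ [Fact q.Prime] (m : ℕ), m ≠ 0 →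
    |gammaK q m - (Real.eulerMascheroniConstant +
        (∑ χ ∈ charsTrivialOn q m, logDeriv χ.LFunction ((1 + (√q)⁻¹ : ℝ) : ℂ)).re)| ≤
      2 ^ 26 * √q * (1 + Real.log q) ^ 18 := by
  have hinv : Tendsto (fun q : ℕ ↦ (√(q : ℝ))⁻¹) atTop (𝓝[>] 0) :=
    tendsto_inv_atTop_nhdsGT_zero.comp (Real.tendsto_sqrt_atTop.comp tendsto_natCast_atTop_atTop)
  filter_upwards [tendsto_natCast_atTop_atTop.eventually (eventually_ge_atTop (Real.exp 2)),
    eventually_inv_sqrt_le_zeroFreeWidth, hinv.eventually eventually_norm_logDeriv_riemannZeta_le]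
    with q hq hwidth hζ _ m hm
  have hsqrt : 0 < √(q : ℝ) := Real.sqrt_pos.2 ((Real.exp_pos 2).trans_le hq)
  have hcard : ((charsTrivialOn q m).card : ℝ) ≤ √q * √q := by
    rw [Real.mul_self_sqrt (Nat.cast_nonneg q), Nat.cast_le]
    have hdvd := Dvd.intro _ (card_charsTrivialOn_mul_card (N := q) hm)
    exact (Nat.le_of_dvd (Nat.totient_pos.2 (NeZero.pos q)) hdvd).trans q.totient_le
  refine (abs_gammaK_sub_re_sum_le hq hm (inv_pos.2 hsqrt) hwidth hζ).trans ?_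
  have hℓ : 1 ≤ 1 + Real.log q := le_add_of_nonneg_right (Real.log_natCast_nonneg q)
  set ℓ := 1 + Real.log q
  calc (charsTrivialOn q m).card * (2 ^ 25 * ℓ ^ 18 * (√q)⁻¹) + (80 * √q * ℓ ^ 3 + 4 / (√q)⁻¹)
      ≤ √q * √q * (2 ^ 25 * ℓ ^ 18 * (√q)⁻¹) + (80 * √q * ℓ ^ 18 + 4 * √q * ℓ ^ 18) := by
        rw [div_inv_eq_mul]
        have : 4 * √q ≤ 4 * √q * ℓ ^ 18 :=
          le_mul_of_one_le_right (by positivity) (one_le_pow₀ hℓ)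
        gcongr ?_ * _ + (_ * ?_ + ?_)
        exact pow_le_pow_right₀ hℓ (by norm_num)
    _ = (2 ^ 25 + 84) * √q * ℓ ^ 18 := by
        field_simp
        ring
    _ ≤ 2 ^ 26 * √q * ℓ ^ 18 := by
        gcongr
        norm_num

lemma eventually_two_mul_gammaK_sub_le : ∀ᶠ q : ℕ in atTop, q.Prime → ∀ r : ℕ, 2 * r ∣ q - 1 →
    2 * gammaK q (2 * r) - gammaK q r ≤ 2 ^ 28 * √q * (1 + Real.log q) ^ 18 := by
  filter_upwards [eventually_abs_gammaK_sub_re_sum_le, eventually_gt_atTop 0] with q hγ hq₀ hq r hr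
  have : Fact q.Prime := ⟨hq⟩
  have h2r₀ : 2 * r ≠ 0 := (Nat.pos_of_dvd_of_pos hr (Nat.sub_pos_of_lt hq.one_lt)).ne'
  have hsqrt : 1 ≤ √(q : ℝ) := Real.one_le_sqrt.2 (mod_cast hq₀)
  have hre := re_two_mul_sum_logDeriv_sub_le hr (s := 1 + (√q)⁻¹) (by
    rw [lt_add_iff_pos_right]
    positivity)
  have hupper := (abs_le.1 (hγ (2 * r) h2r₀)).2
  have hlower := (abs_le.1 (hγ r (right_ne_zero_of_mul h2r₀))).1
  have hone : 1 ≤ √q * (1 + Real.log q) ^ 18 := one_le_mul_of_one_le_of_one_le hsqrt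
    (one_le_pow₀ (le_add_of_nonneg_right (Real.log_natCast_nonneg q)))
  have hmain := Real.eulerMascheroniConstant_lt_two_thirds
  simp only [Complex.sub_re, Complex.mul_re, Complex.re_ofNat, Complex.im_ofNat, zero_mul,
    sub_zero] at hre
  linarith

/-! ### The prime sum `S(m, q)` -/

/-- The function `n ↦ n log p / (pⁿ - 1)`; the first two terms of `Sterm` are differences of its
consecutive values. -/
noncomputable def logDivPowSubOne (p n : ℕ) : ℝ := n * Real.log p / ((p : ℝ) ^ n - 1)

lemma logDivPowSubOne_nonneg {p : ℕ} (hp : 1 ≤ p) (n : ℕ) : 0 ≤ logDivPowSubOne p n :=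
  div_nonneg (mul_nonneg n.cast_nonneg (Real.log_natCast_nonneg p))
    (sub_nonneg.2 (one_le_pow₀ (mod_cast hp)))

lemma antitoneOn_logDivPowSubOne {p : ℕ} (hp : 2 ≤ p) :
    AntitoneOn (logDivPowSubOne p) (Set.Ici 1) := by
  refine antitoneOn_of_succ_le Set.ordConnected_Ici fun n _ hn _ ↦ ?_
  have hp' : (2 : ℝ) ≤ p := mod_cast hp
  have hn' : (1 : ℝ) ≤ n := mod_cast Set.mem_Ici.1 hn
  have hpow : (2 : ℝ) ≤ (p : ℝ) ^ n :=
    hp'.trans (le_self_pow₀ (by linarith) (Nat.one_le_iff_ne_zero.1 hn))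
  have hsucc : 2 * (p : ℝ) ^ n ≤ (p : ℝ) ^ (n + 1) := by
    rw [pow_succ, mul_comm]
    gcongr
  rw [Nat.succ_eq_succ, Nat.succ_eq_add_one, logDivPowSubOne, logDivPowSubOne,
    div_le_div_iff₀ (by linarith) (by linarith), mul_right_comm, mul_right_comm (n : ℝ)]
  refine mul_le_mul_of_nonneg_right ?_ (Real.log_natCast_nonneg p)
  push_cast
  nlinarith

lemma Sterm_of_ne {q m p : ℕ} (hq : 1 ≤ q) (hpq : p ≠ q) :
    Sterm q m p =
      (if gp q m p = 1 then logDivPowSubOne p q - logDivPowSubOne p (q - 1) else 0) +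
      (if 3 ≤ gp q m p then logDivPowSubOne p (gp q m p) - logDivPowSubOne p (gp q m p - 1)
        else 0) +
      (if gp q m p = 2 then Real.log p / ((p : ℝ) ^ 2 - 1) else 0) +
      (if 4 ≤ gp q m p ∧ 2 ∣ gp q m p then
        Real.log p / ((p : ℝ) ^ (gp q m p / 2) - ((p : ℝ) ^ (gp q m p / 2))⁻¹) else 0) := by
  rw [Sterm, if_neg hpq]
  congr 3
  · simp [logDivPowSubOne, Nat.cast_sub hq]
  · split_ifs with h
    · simp [logDivPowSubOne, Nat.cast_sub (show 1 ≤ gp q m p by omega)]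
    · rfl

section Bounds

variable {q m p : ℕ}

lemma logDivPowSubOne_sub_nonpos {n : ℕ} (hp : 2 ≤ p) (hn : 2 ≤ n) :
    logDivPowSubOne p n - logDivPowSubOne p (n - 1) ≤ 0 :=
  sub_nonpos.2 (antitoneOn_logDivPowSubOne hp (Nat.le_sub_one_of_lt hn)
    (Nat.one_le_of_lt hn) (Nat.sub_le n 1))

lemma neg_logDivPowSubOne_two_le_sub {n : ℕ} (hp : 2 ≤ p) (hn : 3 ≤ n) :
    -logDivPowSubOne p 2 ≤ logDivPowSubOne p n - logDivPowSubOne p (n - 1) := by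
  have hn' : 2 ≤ n - 1 := Nat.le_sub_one_of_lt hn
  linarith [logDivPowSubOne_nonneg (one_le_two.trans hp) n, antitoneOn_logDivPowSubOne hp
    (Set.mem_Ici.2 one_le_two) (Set.mem_Ici.2 (one_le_two.trans hn')) hn']

lemma neg_logDivPowSubOne_two_le_Sterm (hq : 3 ≤ q) (hp : 2 ≤ p) :
    -logDivPowSubOne p 2 ≤ Sterm q m p := by
  have hW := logDivPowSubOne_nonneg (one_le_two.trans hp) 2
  have hpow (n : ℕ) : 1 ≤ (p : ℝ) ^ n := one_le_pow₀ (mod_cast one_le_two.trans hp)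
  have hlog := Real.log_natCast_nonneg p
  have htwo : 0 ≤ Real.log p / ((p : ℝ) ^ 2 - 1) := div_nonneg hlog (sub_nonneg.2 (hpow 2))
  have heven : 0 ≤ Real.log p / ((p : ℝ) ^ (gp q m p / 2) - ((p : ℝ) ^ (gp q m p / 2))⁻¹) :=
    div_nonneg hlog (sub_nonneg.2 ((inv_le_one_of_one_le₀ (hpow _)).trans (hpow _)))
  have hq' := neg_logDivPowSubOne_two_le_sub hp hq
  by_cases hpq : p = q
  · rw [Sterm, if_pos hpq]
    linarith
  rw [Sterm_of_ne (by omega) hpq]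
  by_cases h₃ : 3 ≤ gp q m p
  · have hg := neg_logDivPowSubOne_two_le_sub hp h₃
    rw [if_neg (by omega), if_pos h₃, if_neg (by omega)]
    split_ifs <;> linarith
  · rw [if_neg h₃, if_neg (show ¬(4 ≤ gp q m p ∧ 2 ∣ gp q m p) by omega)]
    split_ifs <;> linarith

lemma Sterm_nonpos (hq : 2 ≤ q) (hp : 2 ≤ p) (hg : ¬(2 ≤ gp q m p ∧ 2 ∣ gp q m p)) :
    Sterm q m p ≤ 0 := by
  by_cases hpq : p = q
  · rw [Sterm, if_pos hpq]
  have hq' := logDivPowSubOne_sub_nonpos hp hq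
  rw [Sterm_of_ne (by omega) hpq, if_neg (show gp q m p ≠ 2 by omega),
    if_neg (show ¬(4 ≤ gp q m p ∧ 2 ∣ gp q m p) by omega), add_zero, add_zero]
  refine add_nonpos ?_ ?_
  · split_ifs <;> linarith
  · split_ifs with h₃
    · exact logDivPowSubOne_sub_nonpos hp (by omega)
    · rfl

lemma log_div_sq_sub_one_le (hp : 2 ≤ p) :
    Real.log p / ((p : ℝ) ^ 2 - 1) ≤ 2 * Real.log p / (p : ℝ) ^ 2 := by
  have hp' : (2 : ℝ) ≤ p := mod_cast hp
  rw [div_le_div_iff₀ (by nlinarith) (by positivity)]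
  nlinarith [mul_nonneg (Real.log_natCast_nonneg p) (show 0 ≤ (p : ℝ) ^ 2 - 2 by nlinarith)]

lemma Sterm_le_two_mul_log_div_max (hq : 2 ≤ q) (hp : 2 ≤ p) :
    Sterm q m p ≤ 2 * Real.log p / max ((p : ℝ) ^ 2) ((p : ℝ) ^ (gp q m p / 2)) := by
  have hp' : (2 : ℝ) ≤ p := mod_cast hp
  have hlog := Real.log_natCast_nonneg p
  have hnonneg : 0 ≤ 2 * Real.log p / max ((p : ℝ) ^ 2) ((p : ℝ) ^ (gp q m p / 2)) := by
    positivity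
  by_cases hpq : p = q
  · rwa [Sterm, if_pos hpq]
  by_cases hg : 2 ≤ gp q m p ∧ 2 ∣ gp q m p
  swap
  · exact (Sterm_nonpos hq hp hg).trans hnonneg
  rw [Sterm_of_ne (by omega) hpq, if_neg (by omega), zero_add]
  obtain hg₂ | hg₄ : gp q m p = 2 ∨ 4 ≤ gp q m p := by omega
  · rw [hg₂, max_eq_left (pow_le_pow_right₀ (by linarith) (by norm_num))]
    simpa using log_div_sq_sub_one_le hp
  · rw [if_pos (by omega), if_neg (by omega), if_pos ⟨hg₄, hg.2⟩, add_zero,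
      max_eq_right (pow_le_pow_right₀ (by linarith) (by omega))]
    have hpow : (p : ℝ) ^ 2 ≤ (p : ℝ) ^ (gp q m p / 2) :=
      pow_le_pow_right₀ (by linarith) (by omega)
    set P := (p : ℝ) ^ (gp q m p / 2)
    have hP : 4 ≤ P := by nlinarith
    have hinv : P⁻¹ ≤ P / 2 := (inv_le_one_of_one_le₀ (by linarith)).trans (by linarith)
    have heven : Real.log p / (P - P⁻¹) ≤ Real.log p / (P / 2) :=
      div_le_div_of_nonneg_left hlog (by linarith) (by linarith)
    rw [div_div_eq_mul_div, mul_comm] at heven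
    linarith [logDivPowSubOne_sub_nonpos hp (show 2 ≤ gp q m p by omega)]

lemma log_div_le_of_sq_le (hp : 0 < p) {M Y : ℝ} (hY : 0 < Y) (hM : (p : ℝ) ^ 2 ≤ M)
    (hYM : Y ≤ M) :
    Real.log p / M ≤ 4 * (p : ℝ) ^ (-(3 / 2) : ℝ) * Y ^ (-(1 / 8) : ℝ) := by
  have hp' : (0 : ℝ) < p := mod_cast hp
  have hM₀ : 0 < M := hY.trans_le hYM
  have hlog : Real.log p ≤ 4 * (p : ℝ) ^ (1 / 4 : ℝ) := by
    linarith [Real.log_le_rpow_div p.cast_nonneg (show (0 : ℝ) < 1 / 4 by norm_num)]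
  calc Real.log p / M = Real.log p * M ^ (-(7 / 8) : ℝ) * M ^ (-(1 / 8) : ℝ) := by
        rw [mul_assoc, ← Real.rpow_add hM₀, div_eq_mul_inv, ← Real.rpow_neg_one]
        norm_num
    _ ≤ 4 * (p : ℝ) ^ (1 / 4 : ℝ) * ((p : ℝ) ^ 2) ^ (-(7 / 8) : ℝ) * Y ^ (-(1 / 8) : ℝ) := by
        gcongr ?_ * ?_ * ?_
        · exact Real.rpow_le_rpow_of_nonpos (by positivity) hM (by norm_num)
        · exact Real.rpow_le_rpow_of_nonpos hY hYM (by norm_num)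
    _ = 4 * (p : ℝ) ^ (-(3 / 2) : ℝ) * Y ^ (-(1 / 8) : ℝ) := by
        rw [← Real.rpow_natCast, ← Real.rpow_mul hp'.le, mul_assoc 4, ← Real.rpow_add hp']
        norm_num

lemma abs_Sterm_le (hq : 3 ≤ q) (hp : 2 ≤ p) :
    |Sterm q m p| ≤ 16 * (p : ℝ) ^ (-(3 / 2) : ℝ) := by
  have hp' : (2 : ℝ) ≤ p := mod_cast hp
  have hsq : Real.log p / (p : ℝ) ^ 2 ≤ 4 * (p : ℝ) ^ (-(3 / 2) : ℝ) := by
    simpa using log_div_le_of_sq_le (by omega) one_pos le_rfl (by nlinarith)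
  have hupper : 2 * Real.log p / max ((p : ℝ) ^ 2) ((p : ℝ) ^ (gp q m p / 2)) ≤
      2 * Real.log p / (p : ℝ) ^ 2 := by
    gcongr
    exact le_max_left _ _
  have hlower : logDivPowSubOne p 2 ≤ 4 * (Real.log p / (p : ℝ) ^ 2) := by
    rw [logDivPowSubOne, mul_div_assoc, Nat.cast_two]
    linarith [log_div_sq_sub_one_le hp, mul_div_assoc 2 (Real.log p) ((p : ℝ) ^ 2)]
  have : 0 ≤ Real.log p / (p : ℝ) ^ 2 := by positivity
  rw [mul_div_assoc 2 _ ((p : ℝ) ^ 2)] at hupper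
  refine abs_le.2 ⟨?_, ?_⟩
  · linarith [neg_logDivPowSubOne_two_le_Sterm (m := m) hq hp]
  · linarith [Sterm_le_two_mul_log_div_max (m := m) (show 2 ≤ q by omega) hp]

lemma sub_one_le_pow_of_pow_eq_neg_one {n r : ℕ} (h : (n : ZMod q) ^ r = -1) :
    (q : ℝ) - 1 ≤ (n : ℝ) ^ r := by
  have hdvd : ((n ^ r + 1 : ℕ) : ZMod q) = 0 := by
    push_cast
    rw [h, neg_add_cancel]
  have hle := Nat.le_of_dvd (Nat.succ_pos _) ((ZMod.natCast_eq_zero_iff _ _).1 hdvd)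
  rw [sub_le_iff_le_add]
  exact_mod_cast hle

lemma sub_one_le_pow_gp_div_two_pow [Fact q.Prime] (hg : 2 ≤ gp q m p) (hg₂ : 2 ∣ gp q m p) :
    (q : ℝ) - 1 ≤ ((p : ℝ) ^ (gp q m p / 2)) ^ m := by
  have hsq : (((p : ZMod q) ^ m) ^ (gp q m p / 2)) ^ 2 = 1 := by
    rw [← pow_mul, Nat.div_mul_cancel hg₂]
    exact pow_orderOf_eq_one _
  have hne : ((p : ZMod q) ^ m) ^ (gp q m p / 2) ≠ 1 :=
    pow_ne_one_of_lt_orderOf (by omega) (Nat.div_lt_self (by omega) one_lt_two)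
  have hneg : ((p ^ (gp q m p / 2) : ℕ) : ZMod q) ^ m = -1 := by
    rw [Nat.cast_pow, pow_right_comm]
    exact (sq_eq_one_iff.1 hsq).resolve_left hne
  exact_mod_cast sub_one_le_pow_of_pow_eq_neg_one hneg

lemma Sterm_le [Fact q.Prime] (hp : 2 ≤ p) (hm : m ≠ 0) {Y : ℝ} (hY₀ : 0 < Y)
    (hY : Y ^ m ≤ q - 1) :
    Sterm q m p ≤ 8 * (p : ℝ) ^ (-(3 / 2) : ℝ) * Y ^ (-(1 / 8) : ℝ) := by
  have hq : 2 ≤ q := (Fact.out : q.Prime).two_le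
  by_cases hg : 2 ≤ gp q m p ∧ 2 ∣ gp q m p
  swap
  · exact (Sterm_nonpos hq hp hg).trans (by positivity)
  have hYpow : Y ≤ (p : ℝ) ^ (gp q m p / 2) :=
    le_of_pow_le_pow_left₀ hm (by positivity) (hY.trans (sub_one_le_pow_gp_div_two_pow hg.1 hg.2))
  have hmain := log_div_le_of_sq_le (by omega) hY₀ (le_max_left ((p : ℝ) ^ 2) _)
    (hYpow.trans (le_max_right _ _))
  have hterm := Sterm_le_two_mul_log_div_max (m := m) hq hp
  rw [mul_div_assoc] at hterm
  linarith

lemma summable_primes_rpow : Summable fun p : Nat.Primes ↦ ((p : ℕ) : ℝ) ^ (-(3 / 2) : ℝ) :=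
  (Real.summable_nat_rpow.2 (by norm_num)).comp_injective Nat.Primes.coe_nat_injective

lemma summable_Sterm (hq : 3 ≤ q) : Summable fun p : Nat.Primes ↦ Sterm q m p :=
  .of_abs <| .of_nonneg_of_le (fun _ ↦ abs_nonneg _) (fun p ↦ abs_Sterm_le hq p.2.two_le)
    (summable_primes_rpow.mul_left 16)

lemma Smq_le [Fact q.Prime] (hq : 3 ≤ q) (hm : m ≠ 0) {Y : ℝ} (hY₀ : 0 < Y)
    (hY : Y ^ m ≤ q - 1) :
    Smq q m ≤ (∑' p : Nat.Primes, 8 * ((p : ℕ) : ℝ) ^ (-(3 / 2) : ℝ)) * Y ^ (-(1 / 8) : ℝ) := by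
  rw [Smq, ← tsum_mul_right]
  exact (summable_Sterm hq).tsum_le_tsum (fun p ↦ Sterm_le p.2.two_le hm hY₀ hY)
    ((summable_primes_rpow.mul_left 8).mul_right _)

end Bounds

lemma eventually_Smq_lt {ε : ℝ} (hε : 0 < ε) : ∀ᶠ c : ℝ in atTop, ∀ q m : ℕ, q.Prime → 3 ≤ q →
    m ≠ 0 → Real.exp c ^ m ≤ q - 1 → Smq q m < ε := by
  have hlim : Tendsto (fun c ↦ (∑' p : Nat.Primes, 8 * ((p : ℕ) : ℝ) ^ (-(3 / 2) : ℝ)) *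
      Real.exp c ^ (-(1 / 8) : ℝ)) atTop (𝓝 0) := by
    simpa using ((tendsto_rpow_neg_atTop (show (0 : ℝ) < 1 / 8 by norm_num)).comp
      Real.tendsto_exp_atTop).const_mul (∑' p : Nat.Primes, 8 * ((p : ℕ) : ℝ) ^ (-(3 / 2) : ℝ))
  filter_upwards [hlim.eventually_lt_const hε] with c hc q m hq hq₃ hm hY
  have : Fact q.Prime := ⟨hq⟩
  exact (Smq_le hq₃ hm (Real.exp_pos c) hY).trans_lt hc

/-! ### The constants `γ_{k,q}` -/

lemma inv_natCast_sub_one_div_le {q r : ℕ} (hq : 2 ≤ q) (hr : r ∣ q - 1)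
    (hrlog : (r : ℝ) ≤ Real.log q) :
    (((q - 1) / r : ℕ) : ℝ)⁻¹ ≤ 2 * (1 + Real.log q) / q := by
  have hr₀ : r ≠ 0 := (Nat.pos_of_dvd_of_pos hr (by omega)).ne'
  have hq' : (2 : ℝ) ≤ q := mod_cast hq
  rw [Nat.cast_div hr (mod_cast hr₀), Nat.cast_sub (by omega), Nat.cast_one, inv_div,
    div_le_div_iff₀ (by linarith) (by linarith)]
  nlinarith

lemma eventually_le_gammakq : ∀ᶠ q : ℕ in atTop, q.Prime → ∀ k : ℕ,
    2 * Nat.gcd k (q - 1) ∣ q - 1 → (Nat.gcd k (q - 1) : ℝ) ≤ Real.log q →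
      Real.eulerMascheroniConstant - 2 ^ 30 * ((1 + Real.log q) ^ 19 / √q) -
        Smq q (Nat.gcd k (q - 1)) ≤ gammakq q k := by
  filter_upwards [eventually_two_mul_gammaK_sub_le] with q hγ hq k hdvd hlog
  have hD := hγ hq _ hdvd
  have hh := inv_natCast_sub_one_div_le hq.two_le (dvd_of_mul_left_dvd hdvd) hlog
  rw [gammakq]
  set h := (((q - 1) / Nat.gcd k (q - 1) : ℕ) : ℝ)
  have hh₀ : 0 ≤ h⁻¹ := by positivity
  have hq' : (2 : ℝ) ≤ q := mod_cast hq.two_le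
  have hℓ : 1 ≤ 1 + Real.log q := le_add_of_nonneg_right (Real.log_natCast_nonneg q)
  have hsqrt : 1 ≤ √(q : ℝ) := Real.one_le_sqrt.2 (by linarith)
  have hsq : √(q : ℝ) * √q = q := Real.mul_self_sqrt (by linarith)
  have hbound : h⁻¹ * (2 ^ 28 * √q * (1 + Real.log q) ^ 18) ≤
      2 ^ 29 * ((1 + Real.log q) ^ 19 / √q) :=
    calc _ ≤ 2 * (1 + Real.log q) / (√q * √q) * (2 ^ 28 * √q * (1 + Real.log q) ^ 18) := by
          rw [hsq]
          gcongr
      _ = 2 ^ 29 * ((1 + Real.log q) ^ 19 / √q) := by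
          field_simp
  have hgammaK := mul_le_mul_of_nonneg_left hD hh₀
  have hone : Real.log q / (q - 1) ≤ 2 ^ 28 * √q * (1 + Real.log q) ^ 18 :=
    (div_le_one_of_le₀ (Real.log_le_sub_one_of_pos (by linarith)) (by linarith)).trans <|
      one_le_mul_of_one_le_of_one_le (by linarith) (one_le_pow₀ hℓ)
  have hlogterm := mul_le_mul_of_nonneg_left hone hh₀
  rw [one_div, div_mul_eq_div_div_swap,
    div_eq_inv_mul (Real.log q / (q - 1)) h]
  linarith

lemma gammakq_le_gammakq' {q : ℕ} (hq : 1 ≤ q) (k : ℕ) : gammakq q k ≤ gammakq' q k :=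
  le_add_of_nonneg_right (div_nonneg (Real.log_natCast_nonneg q) (sub_nonneg.2 (mod_cast hq)))

lemma natCast_le_log {q r : ℕ} {c : ℝ} (hc : 1 ≤ c) (hq : Real.exp (2 * r * c) ≤ q) :
    (r : ℝ) ≤ Real.log q := by
  have hlog := (Real.le_log_iff_exp_le ((Real.exp_pos _).trans_le hq)).2 hq
  nlinarith [r.cast_nonneg (α := ℝ)]

lemma exp_pow_le_sub_one {q r : ℕ} {c : ℝ} (hrc : 1 ≤ r * c) (hq : Real.exp (2 * r * c) ≤ q) :
    Real.exp c ^ r ≤ q - 1 := by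
  rw [mul_assoc, two_mul, Real.exp_add] at hq
  rw [← Real.exp_nat_mul]
  nlinarith [Real.add_one_le_exp (r * c)]

lemma log_add_log_log_nonneg {r : ℕ} (hr : 0 < r) :
    0 ≤ Real.log r + Real.log (Real.log (r + 2)) := by
  have hr' : (1 : ℝ) ≤ r := mod_cast hr
  refine add_nonneg (Real.log_natCast_nonneg r) (Real.log_nonneg ?_)
  rw [Real.le_log_iff_exp_le (by linarith)]
  linarith [Real.exp_one_lt_three]

lemma tendsto_const_mul_one_add_log_pow_div_sqrt (C : ℝ) (n : ℕ) :
    Tendsto (fun x : ℕ ↦ C * ((1 + Real.log x) ^ n / √x)) atTop (𝓝 0) := by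
  simpa using ((isLittleO_one_add_log_pow_sqrt n).tendsto_div_nhds_zero.comp
    tendsto_natCast_atTop_atTop).const_mul C

theorem statement2_general {a : ℝ} (ha : a < Real.eulerMascheroniConstant) :
    ∃ c : ℝ, ∀ r q k : ℕ, q.Prime → Real.exp (2 * r * c) ≤ q → q % (2 * r) = 1 →
      Nat.gcd k (q - 1) = r → a < gammakq q k ∧ a < gammakq' q k := by
  obtain ⟨ε, hε, haε⟩ : ∃ ε > 0, a + 2 * ε = Real.eulerMascheroniConstant :=
    ⟨(Real.eulerMascheroniConstant - a) / 2, by linarith, by ring⟩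
  obtain ⟨Q, hQ⟩ := eventually_atTop.1 (eventually_le_gammakq.and
    (((tendsto_const_mul_one_add_log_pow_div_sqrt (2 ^ 30) 19).eventually_lt_const hε).and
      (eventually_ge_atTop 3)))
  obtain ⟨c, hc, hQc, hS⟩ := ((eventually_ge_atTop 1).and
    ((Real.tendsto_exp_atTop.eventually_ge_atTop (Q : ℝ)).and (eventually_Smq_lt hε))).exists
  refine ⟨c, fun r q k hq hexp hmod hk ↦ ?_⟩
  have hr₀ : r ≠ 0 := by
    rintro rfl
    exact hq.ne_one (by simpa using hmod)
  have hdvd : 2 * r ∣ q - 1 := hmod ▸ Nat.dvd_sub_mod q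
  have hpow := exp_pow_le_sub_one
    (one_le_mul_of_one_le_of_one_le (mod_cast Nat.one_le_iff_ne_zero.2 hr₀) hc) hexp
  have hQq : (Q : ℝ) ≤ q := by
    linarith [le_self_pow₀ (Real.one_le_exp (show 0 ≤ c by linarith)) hr₀]
  obtain ⟨hγ, herror, hq₃⟩ := hQ q (mod_cast hQq)
  have hlower := hγ hq k (hk ▸ hdvd) (hk ▸ natCast_le_log hc hexp)
  rw [hk] at hlower
  have hmain : a < gammakq q k := by linarith [hS q r hq hq₃ hr₀ hpow]
  exact ⟨hmain, hmain.trans_le (gammakq_le_gammakq' hq.one_le k)⟩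

/-- There is an absolute constant `c₁` such that for every positive integer
`r`, every prime `q ≥ exp(2r(log r + log log(r+2) + c₁))` with `q ≡ 1 (mod 2r)`, and every
positive integer `k` with `gcd(k, q−1) = r`, one has `γ_{k,q} > 1/2` and `γ'_{k,q} > 1/2`. -/
theorem statement2 :
    ∃ c₁ : ℝ, ∀ r : ℕ, 0 < r → ∀ q : ℕ, q.Prime →
      Real.exp (2 * r * (Real.log r + Real.log (Real.log (r + 2)) + c₁)) ≤ (q : ℝ) →
      q % (2 * r) = 1 →
      ∀ k : ℕ, 0 < k → Nat.gcd k (q - 1) = r →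
        1 / 2 < gammakq q k ∧ 1 / 2 < gammakq' q k := by
  obtain ⟨c, hc⟩ := statement2_general Real.one_half_lt_eulerMascheroniConstant
  refine ⟨c, fun r hr q hq hqr hmod k _ hk ↦ hc r q k hq (le_trans ?_ hqr) hmod hk⟩
  gcongr
  exact le_add_of_nonneg_left (log_add_log_log_nonneg hr)
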